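/- arXiv:2001.02055 — 2 statements merged into one kernel-verified Lean document; each statement's English description precedes it below -/
import Mathlib

section
/- Let K ≥ 2 be an integer, L ∈ {1,−1}, and let Q be a prime power such that one of the following holds: (i) L = 1, K ∈ {2,3,4,5}, Q ≥ K², and Q ≡ K or 2K−1 (mod K(K−1)); (ii) L = 1 and Q = K; (iii) L = −1, K = 3, Q ≥ 7, and Q ≡ 1 or 3 (mod 6); (iv) L = −1, K = 4, and Q ≡ 5 (mod 24). Then for every integer J ≥ 1 there exists an ETF(D^{(J)}, N^{(J)}) in ℂ^{D^{(J)}}, where D^{(J)} = (1/K)·[Q−(K−1)L]·Q^{2J−1} and N^{(J)} = ([Q−(K−1)L]/(K−1))·(Q^{2J}−1)/(Q+L). -/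
open scoped BigOperators

/-- A family `(φ n)` of vectors is an equiangular tight frame `ETF(D,N)`. -/
def IsETF {ι E : Type*} [Fintype ι] [NormedAddCommGroup E] [InnerProductSpace ℂ E]
    (D N : ℕ) (φ : ι → E) : Prop :=
  (∀ n, ‖φ n‖ = 1) ∧
  (∀ n n', n ≠ n' →
    ‖(inner ℂ (φ n) (φ n') : ℂ)‖ ^ 2 = ((N : ℝ) - D) / (D * ((N : ℝ) - 1))) ∧
  (∀ y : E, ∑ n, (inner ℂ (φ n) y : ℂ) • φ n = ((N : ℂ) / (D : ℂ)) • y)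

/-- group divisible design with block sizes in `S` and groups the fibres of `grp` -/
def GDD (S : Set ℕ) {V G : Type} (grp : V → G) : Prop :=
  ∃ (ι : Type) (_ : Finite ι) (B : ι → Set V), (∀ i, (B i).ncard ∈ S) ∧
    (∀ i x y, x ∈ B i → y ∈ B i → grp x = grp y → x = y) ∧
    ∀ x y, grp x ≠ grp y → ∃! i, x ∈ B i ∧ y ∈ B i

/-- pairwise balanced design -/
def PBD (S : Set ℕ) (V : Type) : Prop := GDD S (id : V → V)

/-- uniform group divisible design of type `m^u` -/
def Gd (k m u : ℕ) : Prop := GDD {k} (Prod.fst : Fin u × Fin m → Fin u)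

theorem GDD.mono {S T : Set ℕ} {V G : Type} {grp : V → G} (hST : S ⊆ T) (h : GDD S grp) :
    GDD T grp := by
  obtain ⟨ι, hι, B, h1, h2, h3⟩ := h
  exact ⟨ι, hι, B, fun i => hST (h1 i), h2, h3⟩

theorem GDD.of_equiv {S : Set ℕ} {V G V' G' : Type} {grp : V → G} {grp' : V' → G'} (e : V ≃ V')
    (he : ∀ x y, grp x = grp y ↔ grp' (e x) = grp' (e y)) (h : GDD S grp) : GDD S grp' := by
  obtain ⟨ι, hι, B, h1, h2, h3⟩ := h
  refine ⟨ι, hι, fun i => e.symm ⁻¹' (B i), fun i => ?_, ?_, ?_⟩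
  · change (e.symm ⁻¹' (B i)).ncard ∈ S
    rw [← Equiv.image_eq_preimage_symm, Set.ncard_image_of_injective _ e.injective]; exact h1 i
  · intro i x y hx hy hxy
    have := h2 i (e.symm x) (e.symm y) hx hy ((he _ _).2 (by simpa using hxy))
    simpa using this
  · intro x y hxy
    apply h3 (e.symm x) (e.symm y)
    intro hh
    apply hxy
    simpa using (he _ _).1 hh

theorem PBD.of_equiv {S : Set ℕ} {V V' : Type} (e : V ≃ V') (h : PBD S V) : PBD S V' :=
  GDD.of_equiv e (by simp) h

theorem PBD.of_card {S : Set ℕ} {V V' : Type} [Finite V] [Finite V']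
    (e : Nat.card V = Nat.card V') (h : PBD S V) : PBD S V' :=
  PBD.of_equiv ((Finite.equivFinOfCardEq e).trans (Finite.equivFin V').symm) h

/-- substitution: replace every block by a design on its preimage -/
theorem GDD.subst {S T : Set ℕ} {V G W : Type} {grp : V → G} (p : W → V) (h : GDD S grp)
    (hs : ∀ A : Set V, A.ncard ∈ S → GDD T (fun w : {w : W // p w ∈ A} => p w.1)) :
    GDD T (grp ∘ p) := by
  obtain ⟨ι, hι, B, h1, h2, h3⟩ := h
  choose κ hκ C c1 c2 c3 using fun i => hs (B i) (h1 i)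
  refine ⟨Σ i, κ i, inferInstance, fun j => Subtype.val '' (C j.1 j.2), ?_, ?_, ?_⟩
  · rintro ⟨i, j⟩
    rw [Set.ncard_image_of_injective _ Subtype.val_injective]; exact c1 i j
  · rintro ⟨i, j⟩ _ _ ⟨x, hx, rfl⟩ ⟨y, hy, rfl⟩ hxy
    have := h2 i _ _ x.2 y.2 hxy
    rw [c2 i j x y hx hy this]
  · intro x y hxy
    obtain ⟨i, ⟨hxi, hyi⟩, hi⟩ := h3 _ _ hxy
    have hne : p x ≠ p y := fun hh => hxy (by simp [hh])
    obtain ⟨j, ⟨hxj, hyj⟩, hj⟩ := c3 i ⟨x, hxi⟩ ⟨y, hyi⟩ hne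
    refine ⟨⟨i, j⟩, ⟨⟨_, hxj, rfl⟩, ⟨_, hyj, rfl⟩⟩, ?_⟩
    rintro ⟨i', j'⟩ ⟨⟨x', hx', rfl⟩, ⟨y', hy', rfl⟩⟩
    obtain rfl : i' = i := hi i' ⟨x'.2, y'.2⟩
    obtain rfl := hj j' ⟨hx', hy'⟩
    rfl

/-- filling the groups -/
theorem GDD.fill {T : Set ℕ} {V G F : Type} [Finite G] {grp : V → G} {f : V → F}
    (hf : ∀ x y, f x = f y → grp x = grp y)
    (h : GDD T grp) (hs : ∀ g, GDD T (fun w : {w : V // grp w = g} => f w.1)) :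
    GDD T f := by
  obtain ⟨ι, hι, B, h1, h2, h3⟩ := h
  choose κ hκ C c1 c2 c3 using hs
  refine ⟨ι ⊕ Σ i, κ i, inferInstance,
    Sum.elim B (fun j => Subtype.val '' (C j.1 j.2)), ?_, ?_, ?_⟩
  · rintro (i | ⟨i, j⟩)
    · exact h1 i
    · simp only [Sum.elim_inr]
      rw [Set.ncard_image_of_injective _ Subtype.val_injective]; exact c1 i j
  · rintro (i | ⟨i, j⟩)
    · intro x y hx hy hxy
      exact h2 i x y hx hy (hf _ _ hxy)
    · rintro _ _ ⟨x, hx, rfl⟩ ⟨y, hy, rfl⟩ hxy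
      rw [c2 i j x y hx hy hxy]
  · intro x y hxy
    by_cases hg : grp x = grp y
    · obtain ⟨j, ⟨hxj, hyj⟩, hj⟩ := c3 (grp y) ⟨x, hg⟩ ⟨y, rfl⟩ hxy
      refine ⟨Sum.inr ⟨_, j⟩, ⟨⟨_, hxj, rfl⟩, ⟨_, hyj, rfl⟩⟩, ?_⟩
      rintro (i | ⟨i', j'⟩)
      · rintro ⟨hx, hy⟩
        exact absurd (congrArg f (h2 i x y hx hy hg)) hxy
      · dsimp only [Sum.elim_inr]
        rintro ⟨⟨x', hx', rfl⟩, ⟨⟨y', py⟩, hy', rfl⟩⟩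
        subst py
        obtain rfl := hj j' ⟨hx', hy'⟩
        rfl
    · obtain ⟨i, ⟨hxi, hyi⟩, hi⟩ := h3 _ _ hg
      refine ⟨Sum.inl i, ⟨hxi, hyi⟩, ?_⟩
      rintro (i' | ⟨i', j'⟩)
      · rintro ⟨hx, hy⟩
        rw [hi i' ⟨hx, hy⟩]
      · rintro ⟨⟨x', hx', rfl⟩, ⟨y', hy', rfl⟩⟩
        exact absurd (x'.2.trans y'.2.symm) hg

/-- filling the groups with one extra point -/
theorem GDD.fillInf {T : Set ℕ} {V G : Type} [Finite G] {grp : V → G}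
    (h : GDD T grp) (hs : ∀ g, PBD T (Option {w : V // grp w = g})) :
    PBD T (Option V) := by
  obtain ⟨ι, hι, B, h1, h2, h3⟩ := h
  choose κ hκ C c1 c2 c3 using hs
  have inj : ∀ g, Function.Injective (Option.map (Subtype.val : {w : V // grp w = g} → V)) :=
    fun g => Option.map_injective Subtype.val_injective
  refine ⟨ι ⊕ Σ i, κ i, inferInstance,
    Sum.elim (fun i => some '' B i) (fun j => Option.map Subtype.val '' (C j.1 j.2)), ?_, ?_, ?_⟩
  · rintro (i | ⟨i, j⟩)
    · simp only [Sum.elim_inl]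
      rw [Set.ncard_image_of_injective _ (Option.some_injective _)]; exact h1 i
    · simp only [Sum.elim_inr]
      rw [Set.ncard_image_of_injective _ (inj _)]; exact c1 i j
  · intro i x y _ _ hxy
    exact hxy
  · have key : ∀ (x : Option V) (y : V), x ≠ some y →
        ∃! i, x ∈ (Sum.elim (fun i => some '' B i)
          (fun j : Σ i, κ i => Option.map Subtype.val '' (C j.1 j.2)) i) ∧
          some y ∈ (Sum.elim (fun i => some '' B i)
          (fun j : Σ i, κ i => Option.map Subtype.val '' (C j.1 j.2)) i) := by
      intro x y hxy
      by_cases hg : ∃ x' : Option {w : V // grp w = grp y}, x'.map Subtype.val = x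
      · obtain ⟨x, rfl⟩ := hg
        have hne : x ≠ some ⟨y, rfl⟩ := by rintro rfl; exact hxy rfl
        obtain ⟨j, ⟨hxj, hyj⟩, hj⟩ := c3 (grp y) x (some ⟨y, rfl⟩) hne
        refine ⟨Sum.inr ⟨_, j⟩, ⟨⟨_, hxj, rfl⟩, ⟨_, hyj, rfl⟩⟩, ?_⟩
        rintro (i | ⟨i', j'⟩)
        · rintro ⟨⟨x', hx', h'⟩, ⟨y', hy', h''⟩⟩
          cases h''
          cases x with
          | none => simp at h'
          | some x =>
            simp only [Option.map_some, Option.some.injEq] at h'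
            subst h'
            exact absurd (congrArg some (h2 i _ _ hx' hy' x.2)) hxy
        · dsimp only [Sum.elim_inr]
          rintro ⟨⟨x', hx', h'⟩, ⟨y', hy', h''⟩⟩
          cases y' with
          | none => simp at h''
          | some y' =>
            simp only [Option.map_some, Option.some.injEq] at h''
            obtain ⟨y', py⟩ := y'
            subst h''
            subst py
            obtain rfl := inj _ h'
            obtain rfl := hj j' ⟨hx', hy'⟩
            rfl
      · cases x with
        | none => exact absurd ⟨none, rfl⟩ hg
        | some x =>
          have hg' : grp x ≠ grp y := fun hh => hg ⟨some ⟨x, hh⟩, rfl⟩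
          obtain ⟨i, ⟨hxi, hyi⟩, hi⟩ := h3 _ _ hg'
          refine ⟨Sum.inl i, ⟨⟨_, hxi, rfl⟩, ⟨_, hyi, rfl⟩⟩, ?_⟩
          rintro (i' | ⟨i', j'⟩)
          · rintro ⟨⟨x', hx', h'⟩, ⟨y', hy', h''⟩⟩
            cases h'; cases h''
            rw [hi i' ⟨hx', hy'⟩]
          · rintro ⟨⟨x', hx', h'⟩, ⟨y', hy', h''⟩⟩
            cases y' with
            | none => simp at h''
            | some y' =>
              cases x' with
              | none => simp at h'
              | some x' =>
                simp only [Option.map_some, Option.some.injEq] at h' h''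
                subst h'; subst h''
                exact absurd (x'.2.trans y'.2.symm) hg'
    intro x y hxy
    cases y with
    | some y => exact key x y hxy
    | none =>
      cases x with
      | none => exact absurd rfl hxy
      | some x =>
        simp_rw [and_comm (a := some x ∈ _)]
        exact key none x (by simp)

theorem GDD.normalize {k m u : ℕ} {V G : Type} [Finite V] [Finite G] {grp : V → G}
    (h : GDD {k} grp) (hG : Nat.card G = u) (hm : ∀ g, Nat.card {v // grp v = g} = m) :
    Gd k m u := by
  have e1 : G ≃ Fin u := Finite.equivFinOfCardEq hG
  have e2 : ∀ g, {v // grp v = g} ≃ Fin m := fun g => Finite.equivFinOfCardEq (hm g)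
  let e : V ≃ Fin u × Fin m :=
    (Equiv.sigmaFiberEquiv grp).symm.trans
      ((Equiv.sigmaCongrRight e2).trans ((Equiv.sigmaEquivProd _ _).trans
        (Equiv.prodCongr e1 (Equiv.refl _))))
  refine GDD.of_equiv e (fun x y => ?_) h
  change _ ↔ e1 (grp x) = e1 (grp y)
  rw [e1.injective.eq_iff]

theorem GDD.inflate {S : Set ℕ} {κ m : ℕ} {V G : Type} [Finite V] {grp : V → G} (h : GDD S grp)
    (hS : ∀ n ∈ S, Gd κ m n) : GDD {κ} (grp ∘ Prod.fst : V × Fin m → G) := by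
  apply GDD.subst _ h
  intro A hA
  let e1 : Fin A.ncard ≃ A := (Finite.equivFinOfCardEq (Nat.card_coe_set_eq A)).symm
  let e : Fin A.ncard × Fin m ≃ {w : V × Fin m // w.1 ∈ A} :=
    { toFun := fun p => ⟨(e1 p.1, p.2), (e1 p.1).2⟩
      invFun := fun p => (e1.symm ⟨p.1.1, p.2⟩, p.1.2)
      left_inv := fun p => by simp
      right_inv := fun p => by simp }
  refine GDD.of_equiv e (fun x y => ?_) (hS _ hA)
  change _ ↔ (e1 x.1 : V) = e1 y.1
  rw [Subtype.val_injective.eq_iff, e1.injective.eq_iff]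

theorem card_fst_fiber {V : Type} (m : ℕ) (g : V) :
    Nat.card {w : V × Fin m // w.1 = g} = m := by
  let e : {w : V × Fin m // w.1 = g} ≃ Fin m :=
    { toFun := fun p => p.1.2
      invFun := fun x => ⟨(g, x), rfl⟩
      left_inv := by rintro ⟨⟨a, b⟩, rfl⟩; rfl
      right_inv := fun x => rfl }
  simp [Nat.card_congr e]

/-- Wilson's fundamental construction for PBDs -/
theorem PBD.toGd {S : Set ℕ} {κ m u : ℕ} {V : Type} [Finite V] (h : PBD S V)
    (hS : ∀ n ∈ S, Gd κ m n) (hV : Nat.card V = u) : Gd κ m u := by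
  refine GDD.normalize (GDD.inflate h hS) hV (fun g => ?_)
  exact card_fst_fiber m g

theorem PBD.ofGd {k u : ℕ} (h : Gd k 1 u) : PBD {k} (Fin u) := by
  refine GDD.of_equiv (Equiv.prodUnique (Fin u) (Fin 1)) (fun x y => ?_) h
  simp

theorem PBD.ofGd' {k u : ℕ} {V : Type} [Finite V] (h : Gd k 1 u) (hV : Nat.card V = u) :
    PBD {k} V :=
  PBD.of_card (by simp [hV]) (PBD.ofGd h)

theorem PBD.toGd1 {k u : ℕ} {V : Type} [Finite V] (h : PBD {k} V) (hV : Nat.card V = u) :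
    Gd k 1 u := by
  refine GDD.normalize h hV (fun g => ?_)
  simp

theorem PBD.single {S : Set ℕ} {V : Type} (h : Nat.card V ∈ S) : PBD S V := by
  refine ⟨Unit, inferInstance, fun _ => Set.univ, fun _ => ?_, fun _ _ _ _ _ h => h, ?_⟩
  · rwa [Set.ncard_univ]
  · intro x y _
    exact ⟨(), by simp, by simp⟩

theorem GDD.of_subsingleton {S : Set ℕ} {V G : Type} {grp : V → G} (h : ∀ x y, grp x = grp y) :
    GDD S grp :=
  ⟨Empty, inferInstance, fun i => i.elim, fun i => i.elim, fun i => i.elim,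
    fun x y hxy => absurd (h x y) hxy⟩

theorem Gd_zero (k m : ℕ) : Gd k m 0 := GDD.of_subsingleton (fun x => x.1.elim0)
theorem Gd_one (k m : ℕ) : Gd k m 1 := GDD.of_subsingleton (fun _ _ => Subsingleton.elim _ _)

theorem card_option {V : Type} [Finite V] : Nat.card (Option V) = Nat.card V + 1 := by
  exact Finite.card_option

/-- add a point at infinity -/
theorem Gd.addInf {k u : ℕ} (hk : 1 ≤ k) (h : Gd k (k - 1) u) : Gd k 1 ((k - 1) * u + 1) := by
  refine PBD.toGd1 (V := Option (Fin u × Fin (k - 1))) (GDD.fillInf h fun g => ?_) ?_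
  · apply PBD.single
    rw [card_option, card_fst_fiber]
    simp; omega
  · rw [card_option]; simp [mul_comm]

theorem card_eq_mul_of_fiber {V G : Type} [Finite V] [Finite G] {grp : V → G} {m : ℕ}
    (hm : ∀ g, Nat.card {v // grp v = g} = m) : Nat.card V = Nat.card G * m := by
  have e2 : ∀ g, {v // grp v = g} ≃ Fin m := fun g => Finite.equivFinOfCardEq (hm g)
  have e : V ≃ G × Fin m :=
    (Equiv.sigmaFiberEquiv grp).symm.trans
      ((Equiv.sigmaCongrRight e2).trans (Equiv.sigmaEquivProd _ _))
  rw [Nat.card_congr e]; simp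

/-- delete a point -/
theorem Gd.delete {k u : ℕ} (hk : 2 ≤ k) (h : Gd k 1 ((k - 1) * u + 1)) : Gd k (k - 1) u := by
  let W := Fin ((k - 1) * u)
  have h' : PBD {k} (Option W) := PBD.ofGd' h (by rw [card_option]; simp [W])
  obtain ⟨ι, hι, B, h1, h2, h3⟩ := h'
  choose f hf hf2 using fun w : W => h3 none (some w) (by simp)
  let grp : W → {i // none ∈ B i} := fun w => ⟨f w, (hf w).1⟩
  have hfib : ∀ g, Nat.card {v // grp v = g} = k - 1 := by
    rintro ⟨g, hg⟩
    have h4 : some '' {v | grp v = ⟨g, hg⟩} = B g \ {none} := by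
      ext x
      cases x with
      | none => simp
      | some x =>
        simp only [Set.mem_image, Set.mem_ofPred_eq, Option.some.injEq, exists_eq_right,
          Set.mem_sdiff, Set.mem_singleton_iff, reduceCtorEq, not_false_eq_true, and_true]
        constructor
        · intro hx
          have : f x = g := congrArg Subtype.val hx
          rw [← this]; exact (hf x).2
        · intro hx
          apply Subtype.ext
          exact (hf2 x g ⟨hg, hx⟩).symm
    have h5 : {v | grp v = ⟨g, hg⟩}.ncard = k - 1 := by
      rw [← Set.ncard_image_of_injective _ (Option.some_injective W), h4,
        Set.ncard_sdiff_singleton_of_mem hg]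
      rw [h1 g]
    exact h5
  have hG : Nat.card {i // none ∈ B i} = u := by
    have := card_eq_mul_of_fiber hfib
    have h6 : Nat.card W = (k - 1) * u := by simp [W]
    have h7 := h6.symm.trans this
    exact (Nat.eq_of_mul_eq_mul_left (by omega) (h7.trans (mul_comm _ _))).symm
  have hfin : Finite {i // none ∈ B i} := inferInstance
  refine GDD.normalize (grp := grp) ?_ hG hfib
  refine ⟨{i // none ∉ B i}, inferInstance, fun i => some ⁻¹' B i.1, ?_, ?_, ?_⟩
  · rintro ⟨i, hi⟩
    have : (some '' (some ⁻¹' B i : Set W)) = B i := by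
      rw [Set.image_preimage_eq_iff]
      intro x hx
      cases x with
      | none => exact absurd hx hi
      | some x => exact ⟨x, rfl⟩
    rw [← Set.ncard_image_of_injective _ (Option.some_injective W), this]
    exact h1 i
  · rintro ⟨i, hi⟩ x y hx hy hxy
    by_contra hne
    obtain ⟨j, _, hj⟩ := h3 (some x) (some y) (by simpa using hne)
    have e1 : f x = f y := congrArg Subtype.val hxy
    have e2 := hj i ⟨hx, hy⟩
    have e3 := hj (f x) ⟨(hf x).2, by rw [e1]; exact (hf y).2⟩
    apply hi
    rw [e2, ← e3]; exact (hf x).1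
  · intro x y hxy
    have hne : some x ≠ some y := by
      rintro h; cases h; exact hxy rfl
    obtain ⟨j, hj1, hj⟩ := h3 (some x) (some y) hne
    have hn : none ∉ B j := by
      intro hn
      apply hxy
      apply Subtype.ext
      change f x = f y
      rw [← hf2 x j ⟨hn, hj1.1⟩, ← hf2 y j ⟨hn, hj1.2⟩]
    refine ⟨⟨j, hn⟩, hj1, ?_⟩
    rintro ⟨i, hi⟩ hh
    exact Subtype.ext (hj i hh)

/-- orthogonal arrays of strength two -/
def OA (k n : ℕ) : Prop :=
  ∃ (A X : Type) (_ : Finite A) (_ : Finite X) (f : Fin k → A → X), Nat.card X = n ∧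
    ∀ i j, i ≠ j → ∀ c d, ∃! a, f i a = c ∧ f j a = d

theorem OA.field {k : ℕ} (F : Type) [Field F] [Finite F] (hk : k ≤ Nat.card F + 1) :
    OA k (Nat.card F) := by
  obtain ⟨g⟩ : Nonempty (Fin k ↪ Option F) := by
    have := Fintype.ofFinite F
    apply Function.Embedding.nonempty_of_card_le
    rw [Nat.card_eq_fintype_card] at hk
    simpa using hk
  let f : Option F → F × F → F := fun o p => o.elim p.1 (fun e => p.1 * e + p.2)
  refine ⟨F × F, F, inferInstance, inferInstance, fun i => f (g i), rfl, ?_⟩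
  intro i j hij c d
  have hne : g i ≠ g j := fun h => hij (g.injective h)
  beta_reduce
  generalize g i = x at hne ⊢
  generalize g j = y at hne ⊢
  match x, y, hne with
  | none, none, h => exact absurd rfl h
  | none, some y, _ =>
    refine ⟨(c, d - c * y), ⟨rfl, by simp [f]⟩, ?_⟩
    rintro ⟨a, b⟩ ⟨h1, h2⟩
    simp only [f, Option.elim] at h1 h2
    subst h1; subst h2; simp
  | some x, none, _ =>
    refine ⟨(d, c - d * x), ⟨by simp [f], rfl⟩, ?_⟩
    rintro ⟨a, b⟩ ⟨h1, h2⟩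
    simp only [f, Option.elim] at h1 h2
    subst h1; subst h2; simp
  | some x, some y, h =>
    have hxy : x - y ≠ 0 := by
      intro hh; apply h; rw [sub_eq_zero.1 hh]
    refine ⟨((c - d) / (x - y), c - (c - d) / (x - y) * x), ⟨by simp [f], ?_⟩, ?_⟩
    · simp only [f, Option.elim]; field_simp; ring
    · rintro ⟨a, b⟩ ⟨h1, h2⟩
      simp only [f, Option.elim] at h1 h2
      subst h1; subst h2
      simp only [Prod.mk.injEq]
      constructor
      · field_simp; ring
      · field_simp; ring

theorem OA.primePow {k p e : ℕ} (hp : p.Prime) (he : e ≠ 0) (hk : k ≤ p ^ e + 1) :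
    OA k (p ^ e) := by
  have := Fact.mk hp
  have h := OA.field (k := k) (GaloisField p e) (by rwa [GaloisField.card p e he])
  rwa [GaloisField.card p e he] at h

theorem OA.mul {k m n : ℕ} (h : OA k m) (h' : OA k n) : OA k (m * n) := by
  obtain ⟨A, X, hA, hX, f, hc, hf⟩ := h
  obtain ⟨A', X', hA', hX', f', hc', hf'⟩ := h'
  refine ⟨A × A', X × X', inferInstance, inferInstance, fun i p => (f i p.1, f' i p.2),
    by rw [Nat.card_prod, hc, hc'], ?_⟩
  rintro i j hij ⟨c, c'⟩ ⟨d, d'⟩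
  obtain ⟨a, ⟨h1, h2⟩, h3⟩ := hf i j hij c d
  obtain ⟨a', ⟨h1', h2'⟩, h3'⟩ := hf' i j hij c' d'
  refine ⟨(a, a'), by simp [h1, h2, h1', h2'], ?_⟩
  rintro ⟨b, b'⟩ ⟨h4, h5⟩
  simp only [Prod.mk.injEq] at h4 h5
  rw [h3 b ⟨h4.1, h5.1⟩, h3' b' ⟨h4.2, h5.2⟩]

theorem OA.macNeish {k : ℕ} (n : ℕ)
    (h : ∀ p, p.Prime → p ∣ n → k ≤ p ^ (n.factorization p) + 1) : OA k n := by
  induction n using Nat.recOnPosPrimePosCoprime with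
  | zero =>
    exact ⟨Empty, Empty, inferInstance, inferInstance, fun _ a => a, by simp,
      fun _ _ _ c => c.elim⟩
  | one =>
    exact ⟨Unit, Unit, inferInstance, inferInstance, fun _ a => a, by simp,
      fun _ _ _ c d => ⟨(), by simp, by simp⟩⟩
  | prime_pow p e hp he =>
    refine OA.primePow hp he.ne' ?_
    have := h p hp (dvd_pow_self p he.ne')
    rwa [Nat.Prime.factorization_pow hp, Finsupp.single_eq_same] at this
  | coprime a b ha hb hab iha ihb =>
    refine OA.mul (iha fun p hp hpa => ?_) (ihb fun p hp hpb => ?_)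
    · have := h p hp (hpa.mul_right b)
      rwa [Nat.factorization_eq_of_coprime_left hab
        ((Nat.mem_primeFactorsList (by omega)).2 ⟨hp, hpa⟩)] at this
    · have := h p hp (hpb.mul_left a)
      rwa [Nat.factorization_eq_of_coprime_right hab
        ((Nat.mem_primeFactorsList (by omega)).2 ⟨hp, hpb⟩)] at this

theorem OA.of_dvd {k n : ℕ} (a b : ℕ) (hk : k ≤ 6) (ha : k ≤ 2 ^ a + 1) (hb : k ≤ 3 ^ b + 1)
    (h2 : n % 2 ≠ 0 ∨ n % 2 ^ a = 0) (h3 : n % 3 ≠ 0 ∨ n % 3 ^ b = 0) : OA k n := by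
  rcases Nat.eq_zero_or_pos n with rfl | hn
  · exact ⟨Empty, Empty, inferInstance, inferInstance, fun _ a => a, by simp,
      fun _ _ _ c => c.elim⟩
  apply OA.macNeish
  intro p hp hpn
  have key : ∀ c, p ^ c ∣ n → k ≤ p ^ c + 1 → k ≤ p ^ (n.factorization p) + 1 := by
    intro c hc hk
    have : c ≤ n.factorization p := (hp.pow_dvd_iff_le_factorization hn.ne').1 hc
    have := Nat.pow_le_pow_right hp.pos this
    omega
  rcases Nat.lt_or_ge p 5 with h | h
  · have := hp.two_le
    interval_cases p
    · rcases h2 with h2 | h2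
      · omega
      · exact key a (Nat.dvd_of_mod_eq_zero h2) ha
    · rcases h3 with h3 | h3
      · omega
      · exact key b (Nat.dvd_of_mod_eq_zero h3) hb
    · exact absurd hp (by norm_num)
  · exact key 1 (by simpa using hpn) (by simp; omega)

theorem OA.three (n : ℕ) [NeZero n] : OA 3 n := by
  refine ⟨ZMod n × ZMod n, ZMod n, inferInstance, inferInstance,
    ![Prod.fst, Prod.snd, fun p => p.1 + p.2], by simp, ?_⟩
  intro i j hij c d
  fin_cases i <;> fin_cases j <;> first | exact absurd rfl hij | skip
  · exact ⟨(c, d), by simp, by rintro ⟨a, b⟩ ⟨rfl, rfl⟩; rfl⟩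
  · exact ⟨(c, d - c), by simp, by rintro ⟨a, b⟩ ⟨rfl, rfl⟩; simp⟩
  · exact ⟨(d, c), by simp, by rintro ⟨a, b⟩ ⟨rfl, rfl⟩; rfl⟩
  · exact ⟨(d - c, c), by simp, by rintro ⟨a, b⟩ ⟨rfl, rfl⟩; simp⟩
  · exact ⟨(d, c - d), by simp, by rintro ⟨a, b⟩ ⟨rfl, rfl⟩; simp⟩
  · exact ⟨(c - d, d), by simp, by rintro ⟨a, b⟩ ⟨rfl, rfl⟩; simp⟩

theorem OA.toGd {k n : ℕ} (h : OA k n) : Gd k n k := by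
  obtain ⟨A, X, hA, hX, f, hc, hf⟩ := h
  let e : X ≃ Fin n := Finite.equivFinOfCardEq hc
  refine ⟨A, hA, fun a => Set.range (fun i => (i, e (f i a))), fun a => ?_, ?_, ?_⟩
  · have hinj : Function.Injective (fun i : Fin k => (i, e (f i a))) :=
      fun i j hij => congrArg Prod.fst hij
    change (Set.range (fun i : Fin k => (i, e (f i a)))).ncard ∈ _
    rw [← Set.image_univ, Set.ncard_image_of_injective _ hinj]
    simp
  · rintro a _ _ ⟨i, rfl⟩ ⟨j, rfl⟩ hij
    dsimp only at hij
    subst hij; rfl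
  · rintro ⟨i, c⟩ ⟨j, d⟩ hij
    obtain ⟨a, ⟨h1, h2⟩, h3⟩ := hf i j hij (e.symm c) (e.symm d)
    refine ⟨a, ⟨⟨i, by simp [h1]⟩, ⟨j, by simp [h2]⟩⟩, ?_⟩
    rintro a' ⟨⟨i', hi'⟩, ⟨j', hj'⟩⟩
    simp only [Prod.mk.injEq] at hi' hj'
    obtain ⟨rfl, rfl⟩ := hi'
    obtain ⟨rfl, rfl⟩ := hj'
    exact h3 a' (by simp)

/-- truncated transversal design -/
theorem OA.trunc {k s h : ℕ} (hOA : OA (k + 1) s) (hh : h ≤ s) :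
    ∃ (V : Type) (_ : Finite V) (grp : V → Fin (k + 1)), GDD {k, k + 1} grp ∧
      Nat.card V = k * s + h ∧
      ∀ g, Nat.card {v // grp v = g} = s ∨ Nat.card {v // grp v = g} = h := by
  obtain ⟨ι, hι, B, h1, h2, h3⟩ := hOA.toGd
  let P : Fin (k + 1) × Fin s → Prop := fun p => p.1 = Fin.last k → p.2.1 < h
  let V := {p : Fin (k + 1) × Fin s // P p}
  let eb : ∀ g : Fin (k + 1), {v : V // v.1.1 = g} ≃ {x : Fin s // g = Fin.last k → x.1 < h} :=
    fun g =>
    { toFun := fun v => ⟨v.1.1.2, fun hg => v.1.2 (v.2.trans hg)⟩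
      invFun := fun x => ⟨⟨(g, x.1), x.2⟩, rfl⟩
      left_inv := by rintro ⟨⟨⟨a, b⟩, hp⟩, rfl⟩; rfl
      right_inv := fun x => rfl }
  have c1 : ∀ g : Fin (k + 1), g ≠ Fin.last k → Nat.card {v : V // v.1.1 = g} = s := by
    intro g hg
    rw [Nat.card_congr (eb g), Nat.card_congr (Equiv.subtypeUnivEquiv (fun x hh => absurd hh hg))]
    simp
  have c2 : ∀ g : Fin (k + 1), g = Fin.last k → Nat.card {v : V // v.1.1 = g} = h := by
    intro g hg
    rw [Nat.card_congr (eb g)]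
    let e2 : {x : Fin s // g = Fin.last k → x.1 < h} ≃ Fin h :=
      { toFun := fun x => ⟨x.1.1, x.2 hg⟩
        invFun := fun x => ⟨⟨x.1, by omega⟩, fun _ => x.2⟩
        left_inv := fun x => rfl
        right_inv := fun x => rfl }
    rw [Nat.card_congr e2]; simp
  refine ⟨V, inferInstance, fun v => v.1.1, ?_, ?_, ?_⟩
  · refine ⟨ι, hι, fun i => Subtype.val ⁻¹' B i, ?_, ?_, ?_⟩
    · intro i
      have e1 : (B i).ncard = k + 1 := h1 i
      change (Subtype.val ⁻¹' B i : Set V).ncard ∈ _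
      rw [← Set.ncard_image_of_injective _ Subtype.val_injective]
      have him : (Subtype.val '' (Subtype.val ⁻¹' B i : Set V)) = {x | P x} ∩ B i := by
        ext q
        constructor
        · rintro ⟨v, hv, rfl⟩; exact ⟨v.2, hv⟩
        · rintro ⟨hq1, hq2⟩; exact ⟨⟨q, hq1⟩, hq2, rfl⟩
      rw [him]
      by_cases hb : ∃ p ∈ B i, ¬ P p
      · obtain ⟨p, hp, hPp⟩ := hb
        have : ({x | P x} ∩ B i) = B i \ {p} := by
          ext q
          simp only [Set.mem_inter_iff, Set.mem_sdiff, Set.mem_singleton_iff]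
          constructor
          · rintro ⟨hq1, hq2⟩
            exact ⟨hq2, by rintro rfl; exact hPp hq1⟩
          · rintro ⟨hq1, hq2⟩
            refine ⟨fun hl => ?_, hq1⟩
            exfalso
            apply hq2
            have : p.1 = Fin.last k := by
              by_contra hne; exact hPp (fun h => absurd h hne)
            exact h2 i q p hq1 hp (hl.trans this.symm)
        left
        rw [this]
        rw [Set.ncard_sdiff_singleton_of_mem hp, e1]; simp
      · push Not at hb
        have : ({x | P x} ∩ B i) = B i := Set.inter_eq_right.2 hb
        right
        rw [this]
        rw [e1]; rfl
    · intro i x y hx hy hxy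
      exact Subtype.ext (h2 i _ _ hx hy hxy)
    · intro x y hxy
      exact h3 _ _ hxy
  · rw [Nat.card_congr (Equiv.sigmaFiberEquiv (fun v : V => v.1.1)).symm, Nat.card_sigma,
      Fin.sum_univ_castSucc, c2 _ rfl]
    rw [Finset.sum_congr rfl (fun i _ => c1 _ (Fin.castSucc_lt_last i).ne)]
    simp
  · intro g
    by_cases hg : g = Fin.last k
    · right; exact c2 g hg
    · left; exact c1 g hg

theorem GDD.fillPBD {S : Set ℕ} {V G : Type} [Finite G] {grp : V → G} (h : GDD S grp)
    (hs : ∀ g, Nat.card {v // grp v = g} ∈ S) : PBD S V := by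
  refine GDD.fill (by rintro x y rfl; rfl) h (fun g => ?_)
  exact GDD.of_equiv (grp := id) (Equiv.refl _) (fun x y => by simp [Subtype.ext_iff])
    (PBD.single (hs g))

theorem GDD.fillPBDInf {S : Set ℕ} {V G : Type} [Finite V] [Finite G] {grp : V → G}
    (h : GDD S grp) (hs : ∀ g, Nat.card {v // grp v = g} + 1 ∈ S) : PBD S (Option V) := by
  refine GDD.fillInf h (fun g => PBD.single ?_)
  rw [card_option]; exact hs g

theorem PBD.trunc {S : Set ℕ} {k s h : ℕ} (hOA : OA (k + 1) s) (hh : h ≤ s)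
    (h1 : k ∈ S) (h2 : k + 1 ∈ S) (h3 : s ∈ S) (h4 : h ∈ S) : PBD S (Fin (k * s + h)) := by
  obtain ⟨V, hV, grp, hg, hc, hf⟩ := hOA.trunc hh
  refine PBD.of_card (V := V) (by simp [hc]) (GDD.fillPBD (hg.mono ?_) ?_)
  · rintro x (rfl | rfl)
    · exact h1
    · exact h2
  · intro g
    rcases hf g with hf | hf <;> rw [hf] <;> assumption

theorem PBD.td {S : Set ℕ} {k s : ℕ} (hOA : OA k s)
    (h1 : k ∈ S) (h3 : s ∈ S) : PBD S (Fin (k * s)) := by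
  refine PBD.of_card (V := Fin k × Fin s) (by simp) (GDD.fillPBD (hOA.toGd.mono ?_) ?_)
  · simpa using h1
  · intro g
    rw [card_fst_fiber]; exact h3

theorem PBD.tdInf {S : Set ℕ} {k s : ℕ} (hOA : OA k s)
    (h1 : k ∈ S) (h3 : s + 1 ∈ S) : PBD S (Fin (k * s + 1)) := by
  refine PBD.of_card (V := Option (Fin k × Fin s)) (by rw [card_option]; simp)
    (GDD.fillPBDInf (hOA.toGd.mono ?_) ?_)
  · simpa using h1
  · intro g
    rw [card_fst_fiber]; exact h3

/-- closure forms -/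
theorem Gd.trunc {κ m k s h : ℕ} (hOA : OA (k + 1) s) (hh : h ≤ s) (h1 : Gd κ m k)
    (h2 : Gd κ m (k + 1)) (h3 : Gd κ m s) (h4 : Gd κ m h) : Gd κ m (k * s + h) :=
  PBD.toGd (S := {n | Gd κ m n}) (PBD.trunc hOA hh h1 h2 h3 h4) (fun _ h => h) (by simp)

theorem Gd.td {κ m k s : ℕ} (hOA : OA k s) (h1 : Gd κ m k) (h3 : Gd κ m s) : Gd κ m (k * s) :=
  PBD.toGd (S := {n | Gd κ m n}) (PBD.td hOA h1 h3) (fun _ h => h) (by simp)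

theorem Gd.tdInf {κ m k s : ℕ} (hOA : OA k s) (h1 : Gd κ m k) (h3 : Gd κ m (s + 1)) :
    Gd κ m (k * s + 1) :=
  PBD.toGd (S := {n | Gd κ m n}) (PBD.tdInf hOA h1 h3) (fun _ h => h) (by simp)

theorem Gd.pbd {κ m k u : ℕ} (h : Gd k 1 u) (h1 : Gd κ m k) : Gd κ m u :=
  PBD.toGd (PBD.ofGd h) (by rintro n rfl; exact h1) (by simp)

/-- relative difference families give group divisible designs -/
theorem GDD.ofDF {A P I : Type} [AddCommGroup A] [Finite A] [AddCommGroup P] [Finite I] {k : ℕ}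
    (π : A →+ P) (β : I → Fin k → A)
    (h1 : ∀ i a b i' a' b', a ≠ b → a' ≠ b' → β i a - β i b = β i' a' - β i' b' →
      i = i' ∧ a = a' ∧ b = b')
    (h2 : ∀ d, π d ≠ 0 → ∃ i a b, a ≠ b ∧ β i a - β i b = d)
    (h3 : ∀ i a b, a ≠ b → π (β i a - β i b) ≠ 0) : GDD {k} (π : A → P) := by
  have hinj : ∀ i (t : A), Function.Injective (fun a => β i a + t) := by
    intro i t a b hab
    by_contra hne
    apply h3 i a b hne
    have : β i a = β i b := by simpa using hab
    simp [this]
  refine ⟨I × A, inferInstance, fun j => Set.range (fun a => β j.1 a + j.2), ?_, ?_, ?_⟩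
  · rintro ⟨i, t⟩
    change (Set.range (fun a => β i a + t)).ncard ∈ _
    rw [← Set.image_univ, Set.ncard_image_of_injective _ (hinj i t)]
    simp
  · rintro ⟨i, t⟩ _ _ ⟨a, rfl⟩ ⟨b, rfl⟩ hab
    by_contra hne
    apply h3 i a b (by rintro rfl; exact hne rfl)
    simpa [sub_eq_zero] using hab
  · intro x y hxy
    obtain ⟨i, a, b, hab, hd⟩ := h2 (x - y) (by simpa [sub_eq_zero] using hxy)
    refine ⟨(i, x - β i a), ⟨⟨a, by simp⟩, ⟨b, ?_⟩⟩, ?_⟩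
    · have : β i b = β i a - (x - y) := by rw [← hd]; abel
      simp [this]
    · rintro ⟨i', t'⟩ ⟨⟨a', ha'⟩, ⟨b', hb'⟩⟩
      dsimp only at ha' hb'
      have hne : a' ≠ b' := by
        rintro rfl
        exact hxy (by rw [← ha', ← hb'])
      obtain ⟨rfl, rfl, rfl⟩ := h1 i a b i' a' b' hab hne (by rw [hd, ← ha', ← hb']; abel)
      rw [← ha']; simp

theorem card_hom_fiber {A P : Type} [AddCommGroup A] [Finite A] [AddCommGroup P] [Finite P]
    (π : A →+ P) (hπ : Function.Surjective π) {m : ℕ} (hm : Nat.card A = Nat.card P * m) (g : P) :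
    Nat.card {a // π a = g} = m := by
  have h0 : ∀ g, Nat.card {a // π a = g} = Nat.card {a // π a = 0} := by
    intro g
    obtain ⟨b, rfl⟩ := hπ g
    refine Nat.card_congr
      { toFun := fun a => ⟨a.1 - b, by simp [a.2]⟩
        invFun := fun a => ⟨a.1 + b, by simp [a.2]⟩
        left_inv := fun a => by simp
        right_inv := fun a => by simp }
  have := card_eq_mul_of_fiber h0
  rw [h0 g]
  rw [hm] at this
  exact (Nat.eq_of_mul_eq_mul_left Nat.card_pos this).symm

/-- entries of base blocks -/
def dfEntry (bs : List (List ℕ)) (i a : ℕ) : ℕ := (bs.getD i []).getD a 0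

def dfDiff (v : ℕ) (bs : List (List ℕ)) (t : ℕ × ℕ × ℕ) : ℕ :=
  (dfEntry bs t.1 t.2.1 + (v - dfEntry bs t.1 t.2.2 % v)) % v

def dfTriples (n k : ℕ) : List (ℕ × ℕ × ℕ) :=
  ((List.range n).product ((List.range k).product (List.range k))).filter
    (fun t => t.2.1 != t.2.2)

/-- bit mask of a list of naturals -/
def maskL : List ℕ → ℕ
  | [] => 0
  | d :: l => maskL l ||| 1 <<< d

def maskCheck (target : ℕ) : List ℕ → ℕ → Bool
  | [], acc => acc == target
  | d :: l, acc => !acc.testBit d && maskCheck target l (acc ||| 1 <<< d)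

theorem testBit_one_shiftLeft (d e : ℕ) : (1 <<< d : ℕ).testBit e = decide (d = e) := by
  rw [Nat.one_shiftLeft, Nat.testBit_two_pow]

theorem testBit_maskL (l : List ℕ) (d : ℕ) : (maskL l).testBit d = true ↔ d ∈ l := by
  induction l with
  | nil => simp [maskL]
  | cons e l ih =>
    simp only [maskL, Nat.testBit_or, Bool.or_eq_true, ih, testBit_one_shiftLeft, decide_eq_true_eq,
      List.mem_cons]
    tauto

theorem maskCheck_spec (target : ℕ) (l : List ℕ) (acc : ℕ) (h : maskCheck target l acc = true) :
    l.Nodup ∧ (∀ d ∈ l, acc.testBit d = false) ∧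
      ∀ d, target.testBit d = true ↔ (acc.testBit d = true ∨ d ∈ l) := by
  induction l generalizing acc with
  | nil =>
    simp only [maskCheck, beq_iff_eq] at h
    simp [h]
  | cons e l ih =>
    simp only [maskCheck, Bool.and_eq_true, Bool.not_eq_true'] at h
    obtain ⟨h1, h2, h3⟩ := ih _ h.2
    simp only [Nat.testBit_or, Bool.or_eq_false_iff, testBit_one_shiftLeft, Bool.or_eq_true,
      decide_eq_true_eq, decide_eq_false_iff_not] at h2 h3
    refine ⟨List.nodup_cons.2 ⟨fun he => (h2 e he).2 rfl, h1⟩, ?_, ?_⟩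
    · intro d hd
      rcases List.mem_cons.1 hd with rfl | hd
      · exact h.1
      · exact (h2 d hd).1
    · intro d
      rw [h3, List.mem_cons]
      tauto

theorem maskCheck_maskL {l m : List ℕ} (h : maskCheck (maskL m) l 0 = true) :
    l.Nodup ∧ ∀ d, d ∈ m ↔ d ∈ l := by
  obtain ⟨h1, _, h3⟩ := maskCheck_spec _ _ _ h
  refine ⟨h1, fun d => ?_⟩
  rw [← testBit_maskL, h3]; simp

def dfCheck (v g k : ℕ) (bs : List (List ℕ)) : Bool :=
  maskCheck (maskL ((List.range v).filter (fun d => d % g != 0)))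
    ((dfTriples bs.length k).map (dfDiff v bs)) 0

theorem mem_dfTriples {n k i a b : ℕ} :
    (i, a, b) ∈ dfTriples n k ↔ (i < n ∧ a < k ∧ b < k) ∧ a ≠ b := by
  simp [dfTriples, List.pair_mem_product]

theorem dfDiff_cast (v : ℕ) [NeZero v] (bs : List (List ℕ)) (i a b : ℕ) :
    ((dfDiff v bs (i, a, b) : ℕ) : ZMod v) = (dfEntry bs i a : ZMod v) - dfEntry bs i b := by
  have h : dfEntry bs i b % v ≤ v := (Nat.mod_lt _ (NeZero.pos v)).le
  simp only [dfDiff, ZMod.natCast_mod, Nat.cast_add, Nat.cast_sub h, ZMod.natCast_self]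
  ring

theorem Gd.ofCheck {v g k m : ℕ} [NeZero v] [NeZero g] (bs : List (List ℕ)) (hv : v = g * m)
    (h : dfCheck v g k bs = true) : Gd k m g := by
  obtain ⟨c1, c0⟩ := maskCheck_maskL h
  have c2 : ∀ d ∈ List.range v, d % g ≠ 0 → d ∈ (dfTriples bs.length k).map (dfDiff v bs) := by
    intro d hd hdg
    exact (c0 d).1 (List.mem_filter.2 ⟨hd, by simpa using hdg⟩)
  have c3 : ∀ d ∈ (dfTriples bs.length k).map (dfDiff v bs), d % g ≠ 0 := by
    intro d hd
    simpa using (List.mem_filter.1 ((c0 d).2 hd)).2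
  have hg : g ∣ v := ⟨m, hv⟩
  let π : ZMod v →+ ZMod g := (ZMod.castHom hg (ZMod g)).toAddMonoidHom
  have hπ : Function.Surjective π := ZMod.castHom_surjective hg
  have hπn : ∀ n : ℕ, π (n : ZMod v) = (n : ZMod g) := fun n => map_natCast (ZMod.castHom hg _) n
  let β : Fin bs.length → Fin k → ZMod v := fun i a => (dfEntry bs i a : ZMod v)
  have hβ : ∀ i a b, β i a - β i b = ((dfDiff v bs (i.1, a.1, b.1) : ℕ) : ZMod v) :=
    fun i a b => (dfDiff_cast v bs i a b).symm
  have hlt : ∀ t, dfDiff v bs t < v := fun t => Nat.mod_lt _ (NeZero.pos v)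
  have hmem : ∀ (i : Fin bs.length) (a b : Fin k), a ≠ b →
      (i.1, a.1, b.1) ∈ dfTriples bs.length k := by
    intro i a b hab
    rw [mem_dfTriples]
    exact ⟨⟨i.2, a.2, b.2⟩, fun h => hab (Fin.ext h)⟩
  refine GDD.normalize (grp := (π : ZMod v → ZMod g)) (GDD.ofDF π β ?_ ?_ ?_) (by simp)
    (card_hom_fiber π hπ (by simp [hv]))
  · intro i a b i' a' b' hab hab' hd
    rw [hβ, hβ] at hd
    have hd' : dfDiff v bs (i.1, a.1, b.1) = dfDiff v bs (i'.1, a'.1, b'.1) := by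
      have := congrArg ZMod.val hd
      rwa [ZMod.val_natCast_of_lt (hlt _), ZMod.val_natCast_of_lt (hlt _)] at this
    have := List.inj_on_of_nodup_map c1 (hmem i a b hab) (hmem i' a' b' hab') hd'
    simp only [Prod.mk.injEq] at this
    exact ⟨Fin.ext this.1, Fin.ext this.2.1, Fin.ext this.2.2⟩
  · intro d hd
    have hd' : d.val % g ≠ 0 := by
      intro h0
      apply hd
      have := hπn d.val
      rw [ZMod.natCast_zmod_val] at this
      rw [this, ZMod.natCast_eq_zero_iff]
      exact Nat.dvd_of_mod_eq_zero h0
    have := c2 d.val (List.mem_range.2 (ZMod.val_lt d)) hd'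
    rw [List.mem_map] at this
    obtain ⟨⟨i, a, b⟩, ht, he⟩ := this
    rw [mem_dfTriples] at ht
    refine ⟨⟨i, ht.1.1⟩, ⟨a, ht.1.2.1⟩, ⟨b, ht.1.2.2⟩, fun h => ht.2 (by simpa using h), ?_⟩
    rw [hβ, he, ZMod.natCast_zmod_val]
  · intro i a b hab h0
    rw [hβ, hπn, ZMod.natCast_eq_zero_iff] at h0
    exact c3 _ (List.mem_map.2 ⟨_, hmem i a b hab, rfl⟩) (Nat.mod_eq_zero_of_dvd h0)

def pbdTriples (bs : List (List ℕ)) : List (ℕ × ℕ × ℕ) :=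
  (List.range bs.length).flatMap (fun i => ((List.range (bs.getD i []).length).product
    (List.range (bs.getD i []).length)).filterMap
      (fun t => if t.1 = t.2 then none else some (i, t.1, t.2)))

def pbdVal (n : ℕ) (bs : List (List ℕ)) (t : ℕ × ℕ × ℕ) : ℕ :=
  n * dfEntry bs t.1 t.2.1 + dfEntry bs t.1 t.2.2

def pbdCheck (n : ℕ) (bs : List (List ℕ)) (S : List ℕ) : Bool :=
  bs.all (fun b => S.contains b.length && decide (b.Nodup) && b.all (fun x => x < n)) &&
  maskCheck (maskL (((List.range n).product (List.range n)).filterMap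
    (fun t => if t.1 = t.2 then none else some (n * t.1 + t.2))))
    ((pbdTriples bs).map (pbdVal n bs)) 0

theorem mem_pbdTriples {bs : List (List ℕ)} {i a b : ℕ} :
    (i, a, b) ∈ pbdTriples bs ↔ i < bs.length ∧ (a < (bs.getD i []).length ∧
      b < (bs.getD i []).length) ∧ a ≠ b := by
  simp only [pbdTriples, List.mem_flatMap, List.mem_range, List.mem_filterMap, Prod.exists,
    List.pair_mem_product, Option.ite_none_left_eq_some, Option.some.injEq, Prod.mk.injEq]
  constructor
  · rintro ⟨i', hi', a', b', h1, h2, rfl, rfl, rfl⟩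
    exact ⟨hi', h1, h2⟩
  · rintro ⟨hi, h1, h2⟩
    exact ⟨i, hi, a, b, h1, h2, rfl, rfl, rfl⟩

theorem PBD.ofCheck {n : ℕ} (bs : List (List ℕ)) (S : List ℕ) (h : pbdCheck n bs S = true) :
    PBD {k | k ∈ S} (Fin n) := by
  rw [pbdCheck, Bool.and_eq_true] at h
  obtain ⟨h1, h2⟩ := h
  obtain ⟨h2, h3⟩ := maskCheck_maskL h2
  simp only [List.all_eq_true, Bool.and_eq_true, decide_eq_true_eq, List.contains_iff_mem] at h1
  have hen : ∀ i (hi : i < bs.length) a (ha : a < bs[i].length), dfEntry bs i a = bs[i][a] := by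
    intro i hi a ha
    rw [dfEntry, List.getD_eq_getElem _ _ hi, List.getD_eq_getElem _ _ ha]
  have hco : ∀ x y x' y' : ℕ, y < n → y' < n → n * x + y = n * x' + y' → x = x' ∧ y = y' := by
    intro x y x' y' hy hy' he
    have e1 : (n * x + y) / n = x := by
      rw [Nat.mul_add_div (by omega), Nat.div_eq_of_lt hy, add_zero]
    have e2 : (n * x' + y') / n = x' := by
      rw [Nat.mul_add_div (by omega), Nat.div_eq_of_lt hy', add_zero]
    have : x = x' := by rw [← e1, ← e2, he]
    subst this
    exact ⟨rfl, by omega⟩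
  refine ⟨Fin bs.length, inferInstance, fun i => {x | x.1 ∈ bs[i.1]}, ?_, ?_, ?_⟩
  · intro i
    obtain ⟨⟨ha, hb⟩, hc⟩ := h1 bs[i.1] (by simp)
    change ({x : Fin n | x.1 ∈ bs[i.1]} : Set (Fin n)).ncard ∈ S
    have : Fin.val '' ({x : Fin n | x.1 ∈ bs[i.1]} : Set (Fin n)) = (bs[i.1].toFinset : Set ℕ) := by
      ext x
      constructor
      · rintro ⟨y, hy, rfl⟩
        simpa using hy
      · intro hx
        have hx' : x ∈ bs[i.1] := by simpa using hx
        exact ⟨⟨x, hc x hx'⟩, hx', rfl⟩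
    rw [← Set.ncard_image_of_injective _ Fin.val_injective, this, Set.ncard_coe_finset,
      List.toFinset_card_of_nodup hb]
    exact ha
  · intro _ _ _ _ _ h
    exact h
  · intro x y hxy
    have hxy' : x.1 ≠ y.1 := fun h => hxy (Fin.ext h)
    have hm : n * x.1 + y.1 ∈ (pbdTriples bs).map (pbdVal n bs) := by
      rw [← h3]
      refine List.mem_filterMap.2 ⟨(x.1, y.1), ?_, by simp [hxy']⟩
      simp [List.pair_mem_product]
    obtain ⟨⟨i, a, b⟩, ht, he⟩ := List.mem_map.1 hm
    obtain ⟨hi, ⟨ha, hb⟩, hab⟩ := mem_pbdTriples.1 ht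
    rw [List.getD_eq_getElem _ _ hi] at ha hb
    have hlt : ∀ z ∈ bs[i], z < n := by simpa using (h1 bs[i] (by simp)).2
    rw [pbdVal] at he
    dsimp only at he
    rw [hen i hi a ha, hen i hi b hb] at he
    obtain ⟨hx, hy⟩ := hco _ _ _ _ (hlt _ (by simp)) y.2 he
    refine ⟨⟨i, hi⟩, ⟨?_, ?_⟩, ?_⟩
    · change x.1 ∈ bs[i]
      rw [← hx]; simp
    · change y.1 ∈ bs[i]
      rw [← hy]; simp
    rintro ⟨j, hj⟩ ⟨hx', hy'⟩
    change x.1 ∈ bs[j] at hx'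
    change y.1 ∈ bs[j] at hy'
    obtain ⟨a', ha', ea⟩ := List.getElem_of_mem hx'
    obtain ⟨b', hb', eb⟩ := List.getElem_of_mem hy'
    have hab' : a' ≠ b' := by
      rintro rfl
      exact hxy' (ea.symm.trans eb)
    have ht' : (j, a', b') ∈ pbdTriples bs := by
      rw [mem_pbdTriples, List.getD_eq_getElem _ _ hj]
      exact ⟨hj, ⟨ha', hb'⟩, hab'⟩
    have hv : pbdVal n bs (j, a', b') = pbdVal n bs (i, a, b) := by
      rw [pbdVal, pbdVal]
      dsimp only
      rw [hen j hj a' ha', hen j hj b' hb', hen i hi a ha, hen i hi b hb, ea, eb, hx, hy]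
    have := List.inj_on_of_nodup_map h2 ht' ht hv
    simp only [Prod.mk.injEq] at this
    exact Fin.ext this.1

theorem Gd.ofDF {A P I : Type} [AddCommGroup A] [Finite A] [AddCommGroup P] [Finite P] [Finite I]
    {k m u : ℕ}
    (π : A →+ P) (hπ : Function.Surjective π) (hP : Nat.card P = u) (hA : Nat.card A = u * m)
    (β : I → Fin k → A)
    (h1 : ∀ i a b i' a' b', a ≠ b → a' ≠ b' → β i a - β i b = β i' a' - β i' b' →
      i = i' ∧ a = a' ∧ b = b')
    (h2 : ∀ d, π d ≠ 0 → ∃ i a b, a ≠ b ∧ β i a - β i b = d)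
    (h3 : ∀ i a b, a ≠ b → π (β i a - β i b) ≠ 0) : Gd k m u :=
  GDD.normalize (GDD.ofDF π β h1 h2 h3) hP (card_hom_fiber π hπ (by rw [hA, hP]))

/-- 2-(25,4,1) -/
theorem Gd_4_1_25 : Gd 4 1 25 := by
  refine Gd.ofDF (A := ZMod 5 × ZMod 5) (P := ZMod 5 × ZMod 5) (I := Fin 2)
    (AddMonoidHom.id _) Function.surjective_id (by simp) (by simp)
    ![![(0,0),(0,1),(4,2),(1,1)],![(0,0),(0,2),(3,4),(2,2)]] ?_ ?_ ?_
  · decide +kernel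
  · decide +kernel
  · decide +kernel

set_option synthInstance.maxSize 2000 in
theorem Gd_4_3_9 : Gd 4 3 9 := by
  refine Gd.ofDF (A := (ZMod 3 × ZMod 3) × ZMod 3) (P := ZMod 3 × ZMod 3) (I := Fin 2)
    (AddMonoidHom.fst _ _) Prod.fst_surjective (by simp) (by simp)
    ![![((0,0),0),((0,1),0),((2,1),1),((1,0),1)],![((0,0),0),((0,1),1),((1,2),0),((1,1),1)]] ?_ ?_ ?_
  · decide +kernel
  · decide +kernel
  · decide +kernel

theorem Gd_5_5_9 : Gd 5 5 9 := by
  refine Gd.ofDF (A := (ZMod 3 × ZMod 3) × ZMod 5) (P := ZMod 3 × ZMod 3) (I := Fin 2)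
    (AddMonoidHom.fst _ _) Prod.fst_surjective (by simp) (by simp)
    ![![((0,0),0),((0,1),0),((1,1),2),((2,0),2),((0,2),1)],
      ![((0,0),0),((0,1),2),((1,1),1),((2,1),2),((2,2),0)]] ?_ ?_ ?_
  · decide +kernel
  · decide +kernel
  · decide +kernel

theorem Gd_3_1_13 : Gd 3 1 13 :=
  Gd.ofCheck (v := 13) [[0,1,4],[0,2,7]] rfl (by decide +kernel)

theorem Gd_4_1_37 : Gd 4 1 37 :=
  Gd.ofCheck (v := 37) [[0,1,21,14],[0,2,28,34],[0,4,12,22]] rfl (by decide +kernel)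

theorem Gd_4_2_7 : Gd 4 2 7 := Gd.ofCheck (v := 14) [[0,1,9,11]] rfl (by decide +kernel)

theorem Gd_4_2_13 : Gd 4 2 13 :=
  Gd.ofCheck (v := 26) [[0,1,9,3],[0,4,16,11]] rfl (by decide +kernel)

theorem Gd_4_2_19 : Gd 4 2 19 :=
  Gd.ofCheck (v := 38) [[0,1,29,3],[0,4,20,15],[0,6,31,14]] rfl (by decide +kernel)

theorem Gd_4_2_31 : Gd 4 2 31 :=
  Gd.ofCheck (v := 62) [[0,1,49,37],[0,2,55,35],[0,3,46,57],[0,4,44,34],[0,6,21,45]] rfl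
    (by decide +kernel)

theorem Gd_4_8_10 : Gd 4 8 10 :=
  Gd.ofCheck (v := 80) [[0,1,5,23],[0,2,43,68],[0,3,29,74],[0,7,49,34],[0,8,32,21],[0,16,33,52]]
    rfl (by decide +kernel)

theorem Gd_5_1_41 : Gd 5 1 41 :=
  Gd.ofCheck (v := 41) [[0,1,11,4,29],[0,2,26,21,35]] rfl (by decide +kernel)

theorem Gd_5_1_61 : Gd 5 1 61 :=
  Gd.ofCheck (v := 61) [[0,1,22,55,10],[0,2,44,31,36],[0,3,50,26,46]] rfl (by decide +kernel)

theorem Gd_5_5_13 : Gd 5 5 13 :=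
  Gd.ofCheck (v := 65) [[0,1,22,15,32],[0,2,25,6,62],[0,8,24,53,35]] rfl (by decide +kernel)

theorem Gd_5_1_81 : Gd 5 1 81 :=
  Gd.ofCheck (v := 81) [[0,1,21,4,48],[0,2,67,76,52],[0,6,28,38,46],[0,11,23,36,62]] rfl
    (by decide +kernel)

theorem Gd_5_1_141 : Gd 5 1 141 :=
  Gd.ofCheck (v := 141) [[0,24,66,71,74],[0,27,68,122,128],[0,10,14,44,140],[0,12,35,115,124],
    [0,21,28,64,86],[0,33,72,90,92],[0,31,56,93,109]] rfl (by decide +kernel)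

theorem Gd_5_5_29 : Gd 5 5 29 :=
  Gd.ofCheck (v := 145) [[0,1,72,85,42],[0,16,137,55,92],[0,111,17,10,22],[0,36,127,15,62],
    [0,141,2,95,122],[0,81,32,70,67],[0,136,77,105,57]] rfl (by decide +kernel)

theorem Gd_5_1_161 : Gd 5 1 161 :=
  Gd.ofCheck (v := 161) [[0,42,49,77,147],[0,140,38,61,153],[0,152,113,101,135],[0,83,67,124,43],
    [0,129,44,55,158],[0,107,18,19,71],[0,15,156,111,25],[0,130,64,157,2]] rfl (by decide +kernel)

theorem Gd_5_1_281 : Gd 5 1 281 :=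
  Gd.ofCheck (v := 281) [[0,1,72,136,267],[0,59,33,156,17],[0,109,261,212,160],[0,249,225,144,167],
    [0,79,68,66,18],[0,165,78,241,219],[0,181,106,169,276],[0,3,28,120,7],[0,177,247,55,132],
    [0,46,242,154,201],[0,185,228,94,57],[0,237,245,207,272],[0,214,124,130,31],
    [0,262,10,83,143]] rfl (by decide +kernel)

theorem Gd_5_5_57 : Gd 5 5 57 :=
  Gd.ofCheck (v := 285) [[0,135,133,125,163],[0,29,166,242,42],[0,153,87,158,162],
    [0,264,232,252,47],[0,284,169,108,215],[0,97,131,241,227],[0,248,67,212,263],[0,156,191,65,92],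
    [0,11,56,195,236],[0,16,39,79,98],[0,6,54,157,174],[0,7,25,113,208],[0,24,74,136,167],
    [0,3,55,81,202]] rfl (by decide +kernel)

theorem Gd_5_1_301 : Gd 5 1 301 :=
  Gd.ofCheck (v := 301) [[0,1,72,212,56],[0,79,270,193,210],[0,221,260,197,35],[0,2,159,66,265],
    [0,158,220,97,166],[0,141,223,138,171],[0,4,176,188,181],[0,15,58,103,152],[0,282,67,10,269],
    [0,6,132,98,248],[0,173,194,217,27],[0,122,276,287,26],[0,9,264,189,236],[0,109,87,182,283],
    [0,183,251,231,83]] rfl (by decide +kernel)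

theorem PBD_22 : PBD {k | k ∈ [4, 7]} (Fin 22) :=
  PBD.ofCheck [[15,16,17,18,19,20,21],[0,7,14,15],[1,8,14,16],[2,9,14,17],[3,10,14,18],[4,11,14,19],
    [5,12,14,20],[6,13,14,21],[1,5,13,15],[2,6,7,16],[0,3,8,17],[1,4,9,18],[2,5,10,19],[3,6,11,20],
    [0,4,12,21],[2,3,12,15],[3,4,13,16],[4,5,7,17],[5,6,8,18],[0,6,9,19],[0,1,10,20],[1,2,11,21],
    [8,9,11,15],[9,10,12,16],[10,11,13,17],[7,11,12,18],[8,12,13,19],[7,9,13,20],[7,8,10,21],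
    [4,6,10,15],[0,5,11,16],[1,6,12,17],[0,2,13,18],[1,3,7,19],[2,4,8,20],[3,5,9,21]] _
    (by decide +kernel)

theorem PBD_34 : PBD {k | k ∈ [4, 7]} (Fin 34) :=
  PBD.ofCheck [[27,28,29,30,31,32,33], [0,1,3,9], [1,2,4,10], [0,2,5,11], [3,4,6,12], [4,5,7,13], [3,5,8,14],
    [0,6,7,15], [1,7,8,16], [2,6,8,17], [9,10,12,18], [10,11,13,19], [9,11,14,20],
    [12,13,15,21], [13,14,16,22], [12,14,17,23], [9,15,16,24], [10,16,17,25], [11,15,17,26],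
    [0,18,19,21], [1,19,20,22], [2,18,20,23], [3,21,22,24], [4,22,23,25], [5,21,23,26],
    [6,18,24,25], [7,19,25,26], [8,20,24,26], [0,4,8,27], [1,5,6,27], [2,3,7,27], [9,13,17,27],
    [10,14,15,27], [11,12,16,27], [18,22,26,27], [19,23,24,27], [20,21,25,27], [0,10,20,28],
    [1,11,18,28], [2,9,19,28], [3,13,23,28], [4,14,21,28], [5,12,22,28], [6,16,26,28],
    [7,17,24,28], [8,15,25,28], [0,12,24,29], [1,13,25,29], [2,14,26,29], [3,15,18,29],
    [4,16,19,29], [5,17,20,29], [6,9,21,29], [7,10,22,29], [8,11,23,29], [0,13,26,30],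
    [1,14,24,30], [2,12,25,30], [3,16,20,30], [4,17,18,30], [5,15,19,30], [6,10,23,30],
    [7,11,21,30], [8,9,22,30], [0,14,25,31], [1,12,26,31], [2,13,24,31], [3,17,19,31],
    [4,15,20,31], [5,16,18,31], [6,11,22,31], [7,9,23,31], [8,10,21,31], [0,16,23,32],
    [1,17,21,32], [2,15,22,32], [3,10,26,32], [4,11,24,32], [5,9,25,32], [6,13,20,32],
    [7,14,18,32], [8,12,19,32], [0,17,22,33], [1,15,23,33], [2,16,21,33], [3,11,25,33],
    [4,9,26,33], [5,10,24,33], [6,14,19,33], [7,12,20,33], [8,13,18,33]] _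
    (by decide +kernel)

theorem OA.one (k : ℕ) : OA k 1 :=
  ⟨Unit, Unit, inferInstance, inferInstance, fun _ a => a, by simp,
    fun _ _ _ _ _ => ⟨(), by simp, by simp⟩⟩

theorem Gd_self (k : ℕ) : Gd k 1 k := (OA.one k).toGd

theorem oa4 {s : ℕ} (h : s % 2 ≠ 0 ∨ s % 4 = 0) : OA 4 s :=
  OA.of_dvd 2 1 (by norm_num) (by norm_num) (by norm_num) (by norm_num; omega) (by norm_num; omega)

theorem oa5 {s : ℕ} (h : s % 2 ≠ 0 ∨ s % 4 = 0) (h' : s % 3 ≠ 0 ∨ s % 9 = 0) : OA 5 s :=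
  OA.of_dvd 2 2 (by norm_num) (by norm_num) (by norm_num) (by norm_num; omega) (by norm_num; omega)

theorem oa6 {s : ℕ} (h : s % 2 ≠ 0 ∨ s % 8 = 0) (h' : s % 3 ≠ 0 ∨ s % 9 = 0) : OA 6 s :=
  OA.of_dvd 3 2 (by norm_num) (by norm_num) (by norm_num) (by norm_num; omega) (by norm_num; omega)

theorem Gd_3_2_3 : Gd 3 2 3 := (OA.three 2).toGd

theorem Gd_3_2_4 : Gd 3 2 4 :=
  Gd.delete (k := 3) (u := 4) (by norm_num) (Gd.td (OA.three 3) (Gd_self 3) (Gd_self 3))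

theorem Gd_3_2 (u : ℕ) (hu : u % 3 = 0 ∨ u % 3 = 1) : Gd 3 2 u := by
  induction u using Nat.strong_induction_on with
  | _ u ih =>
  have T : ∀ s h, (s < u ∧ h < u ∧ h ≤ s ∧ (s % 2 ≠ 0 ∨ s % 4 = 0) ∧ (s % 3 = 0 ∨ s % 3 = 1) ∧
      (h % 3 = 0 ∨ h % 3 = 1) ∧ u = 3 * s + h) → Gd 3 2 u := by
    rintro s h ⟨h1, h2, h3, h4, h5, h6, h7⟩
    rw [h7]
    exact Gd.trunc (oa4 h4) h3 Gd_3_2_3 Gd_3_2_4 (ih s h1 h5) (ih h h2 h6)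
  by_cases hbig : 36 ≤ u
  · have : ∃ s, s ≤ u / 3 ∧ u / 3 ≤ s + 2 ∧ (s % 2 ≠ 0 ∨ s % 4 = 0) ∧
        (s % 3 = 0 ∨ s % 3 = 1) := by
      generalize u / 3 = a
      by_cases c1 : (a % 2 ≠ 0 ∨ a % 4 = 0) ∧ (a % 3 = 0 ∨ a % 3 = 1)
      · exact ⟨a, by omega, by omega, c1.1, c1.2⟩
      by_cases c2 : ((a - 1) % 2 ≠ 0 ∨ (a - 1) % 4 = 0) ∧ ((a - 1) % 3 = 0 ∨ (a - 1) % 3 = 1)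
      · exact ⟨a - 1, by omega, by omega, c2.1, c2.2⟩
      exact ⟨a - 2, by omega, by omega, by omega, by omega⟩
    obtain ⟨s, h1, h2, h3, h4⟩ := this
    exact T s (u - 3 * s) (by omega)
  · interval_cases u <;> first | (exfalso; omega) | skip
    · exact Gd_zero 3 2
    · exact Gd_one 3 2
    · exact Gd_3_2_3
    · exact Gd_3_2_4
    · exact Gd.delete (k := 3) (u := 6) (by norm_num) Gd_3_1_13
    · exact Gd.pbd (Gd.addInf (k := 3) (u := 3) (by norm_num) Gd_3_2_3) Gd_3_2_3
    · exact T 3 0 (by omega)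
    · exact T 3 1 (by omega)
    · exact T 3 3 (by omega)
    · exact T 4 1 (by omega)
    · exact T 4 3 (by omega)
    · exact T 4 4 (by omega)
    · exact Gd.td (OA.three 6) Gd_3_2_3 (ih 6 (by omega) (by omega))
    · exact Gd.tdInf (OA.three 6) Gd_3_2_3 (ih 7 (by omega) (by omega))
    · exact T 7 0 (by omega)
    · exact T 7 1 (by omega)
    · exact T 7 3 (by omega)
    · exact T 7 4 (by omega)
    · exact T 7 6 (by omega)
    · exact T 7 7 (by omega)
    · exact T 9 3 (by omega)
    · exact T 9 4 (by omega)
    · exact T 9 6 (by omega)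
    · exact T 9 7 (by omega)

theorem Gd_4_3_4 : Gd 4 3 4 := (oa4 (by norm_num)).toGd

theorem Gd_4_3_5 : Gd 4 3 5 :=
  Gd.delete (k := 4) (u := 5) (by norm_num)
    (Gd.td (oa4 (s := 4) (by norm_num)) (Gd_self 4) (Gd_self 4))

theorem Gd_4_3 (u : ℕ) (hu : u % 4 = 0 ∨ u % 4 = 1) : Gd 4 3 u := by
  induction u using Nat.strong_induction_on with
  | _ u ih =>
  have T : ∀ s h, (s < u ∧ h < u ∧ h ≤ s ∧ (s % 2 ≠ 0 ∨ s % 4 = 0) ∧ (s % 3 ≠ 0 ∨ s % 9 = 0) ∧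
      (s % 4 = 0 ∨ s % 4 = 1) ∧ (h % 4 = 0 ∨ h % 4 = 1) ∧ u = 4 * s + h) → Gd 4 3 u := by
    rintro s h ⟨h1, h2, h3, h4, h4', h5, h6, h7⟩
    rw [h7]
    exact Gd.trunc (oa5 h4 h4') h3 Gd_4_3_4 Gd_4_3_5 (ih s h1 h5) (ih h h2 h6)
  by_cases hbig : 92 ≤ u
  · have : ∃ s, s ≤ u / 4 ∧ u / 4 ≤ s + 4 ∧ s % 3 ≠ 0 ∧ (s % 4 = 0 ∨ s % 4 = 1) := by
      have ha : 4 ≤ u / 4 := by omega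
      generalize u / 4 = a at ha
      obtain ⟨c, r, hr, rfl⟩ : ∃ c r, r < 12 ∧ a = 12 * c + r :=
        ⟨a / 12, a % 12, by omega, by omega⟩
      by_cases c0 : r = 0
      · exact ⟨12 * (c - 1) + 8, by omega, by omega, by omega, by omega⟩
      by_cases c1 : r < 4
      · exact ⟨12 * c + 1, by omega, by omega, by omega, by omega⟩
      by_cases c2 : r < 5
      · exact ⟨12 * c + 4, by omega, by omega, by omega, by omega⟩
      by_cases c3 : r < 8
      · exact ⟨12 * c + 5, by omega, by omega, by omega, by omega⟩
      exact ⟨12 * c + 8, by omega, by omega, by omega, by omega⟩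
    obtain ⟨s, h1, h2, h3, h4⟩ := this
    exact T s (u - 4 * s) (by omega)
  · interval_cases u <;> first | (exfalso; omega) | skip
    · exact Gd_zero 4 3
    · exact Gd_one 4 3
    · exact Gd_4_3_4
    · exact Gd_4_3_5
    · exact Gd.delete (k := 4) (u := 8) (by norm_num) Gd_4_1_25
    · exact Gd_4_3_9
    · exact Gd.delete (k := 4) (u := 12) (by norm_num) Gd_4_1_37
    · exact Gd.pbd (Gd.addInf (k := 4) (u := 4) (by norm_num) Gd_4_3_4) Gd_4_3_4
    · exact T 4 0 (by omega)
    · exact T 4 1 (by omega)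
    · exact T 4 4 (by omega)
    · exact T 5 1 (by omega)
    · exact T 5 4 (by omega)
    · exact T 5 5 (by omega)
    · exact Gd.pbd (Gd.addInf (k := 4) (u := 9) (by norm_num) Gd_4_3_9) Gd_4_3_4
    · exact Gd.tdInf (oa4 (s := 7) (by norm_num)) Gd_4_3_4 (ih 8 (by omega) (by omega))
    · exact T 8 0 (by omega)
    · exact T 8 1 (by omega)
    · exact T 8 4 (by omega)
    · exact T 8 5 (by omega)
    · exact T 8 8 (by omega)
    · exact T 9 5 (by omega)
    · exact T 9 8 (by omega)
    · exact T 9 9 (by omega)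
    · exact Gd.td (oa4 (s := 12) (by norm_num)) Gd_4_3_4 (ih 12 (by omega) (by omega))
    · exact Gd.tdInf (oa4 (s := 12) (by norm_num)) Gd_4_3_4 (ih 13 (by omega) (by omega))
    · exact T 13 0 (by omega)
    · exact T 13 1 (by omega)
    · exact T 13 4 (by omega)
    · exact T 13 5 (by omega)
    · exact T 13 8 (by omega)
    · exact T 13 9 (by omega)
    · exact T 13 12 (by omega)
    · exact T 13 13 (by omega)
    · exact T 16 4 (by omega)
    · exact T 16 5 (by omega)
    · exact T 16 8 (by omega)
    · exact T 16 9 (by omega)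
    · exact T 16 12 (by omega)
    · exact T 16 13 (by omega)
    · exact T 16 16 (by omega)
    · exact T 17 13 (by omega)
    · exact T 17 16 (by omega)
    · exact T 17 17 (by omega)
    · exact T 20 8 (by omega)
    · exact T 20 9 (by omega)

theorem Gd.fill1 {k u : ℕ} (h : Gd k k u) : Gd k 1 (u * k) := by
  refine PBD.toGd1 (GDD.fillPBD h fun g => ?_) (by simp)
  rw [card_fst_fiber]; rfl

theorem Gd_5_4_5 : Gd 5 4 5 := (oa5 (by norm_num) (by norm_num)).toGd

theorem Gd_5_1_25 : Gd 5 1 25 :=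
  Gd.td (oa5 (s := 5) (by norm_num) (by norm_num)) (Gd_self 5) (Gd_self 5)

theorem Gd_5_4_6 : Gd 5 4 6 := Gd.delete (k := 5) (u := 6) (by norm_num) Gd_5_1_25

theorem oa11 : OA 11 11 := by
  have h := OA.primePow (k := 11) (p := 11) (e := 1) (by norm_num) (by norm_num) (by norm_num)
  simpa using h

theorem Gd_5_4 (u : ℕ) (hu : u % 5 = 0 ∨ u % 5 = 1) : Gd 5 4 u := by
  induction u using Nat.strong_induction_on with
  | _ u ih =>
  have T : ∀ s, (s < u ∧ 5 * s ≤ u ∧ u ≤ 6 * s ∧ (s % 2 ≠ 0 ∨ s % 8 = 0) ∧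
      (s % 3 ≠ 0 ∨ s % 9 = 0) ∧ (s % 5 = 0 ∨ s % 5 = 1)) → Gd 5 4 u := by
    rintro s ⟨h1, h2, h3, h4, h4', h5⟩
    have h7 : u = 5 * s + (u - 5 * s) := by omega
    rw [h7]
    exact Gd.trunc (oa6 h4 h4') (by omega) Gd_5_4_5 Gd_5_4_6 (ih s h1 h5)
      (ih (u - 5 * s) (by omega) (by omega))
  have A : ∀ r, r < u → (r % 5 = 0 ∨ r % 5 = 1) → Gd 5 1 (4 * r + 1) :=
    fun r h1 h2 => Gd.addInf (k := 5) (by norm_num) (ih r h1 h2)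
  have D : Gd 5 1 (4 * u + 1) → Gd 5 4 u := Gd.delete (k := 5) (by norm_num)
  have M : ∀ s, Gd 5 1 s → (s % 2 ≠ 0 ∨ s % 4 = 0) → (s % 3 ≠ 0 ∨ s % 9 = 0) →
      Gd 5 1 (5 * s) := fun s h1 h2 h3 => Gd.td (oa5 h2 h3) (Gd_self 5) h1
  have M1 : ∀ s, Gd 5 1 (s + 1) → (s % 2 ≠ 0 ∨ s % 4 = 0) → (s % 3 ≠ 0 ∨ s % 9 = 0) →
      Gd 5 1 (5 * s + 1) := fun s h1 h2 h3 => Gd.tdInf (oa5 h2 h3) (Gd_self 5) h1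
  have E : ∀ h, h ≤ 11 → (h % 5 = 0 ∨ h % 5 = 1) → u = 10 * 11 + h → Gd 5 4 u := by
    intro h h1 h2 h3
    rw [h3]
    exact Gd.trunc oa11 h1 (ih 10 (by omega) (by omega)) (ih 11 (by omega) (by omega))
      (ih 11 (by omega) (by omega)) (ih h (by omega) h2)
  by_cases hbig : 420 ≤ u
  · have : ∃ s, s ≤ u / 5 ∧ u / 5 ≤ s + 13 ∧ s % 2 ≠ 0 ∧ s % 3 ≠ 0 ∧
        (s % 5 = 0 ∨ s % 5 = 1) := by
      have ha : 30 ≤ u / 5 := by omega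
      generalize u / 5 = a at ha
      by_cases c1 : a % 30 = 0
      · exact ⟨a - 5, by omega, by omega, by omega, by omega, by omega⟩
      by_cases c2 : a % 30 < 5
      · exact ⟨a - a % 30 + 1, by omega, by omega, by omega, by omega, by omega⟩
      by_cases c3 : a % 30 < 11
      · exact ⟨a - a % 30 + 5, by omega, by omega, by omega, by omega, by omega⟩
      by_cases c4 : a % 30 < 25
      · exact ⟨a - a % 30 + 11, by omega, by omega, by omega, by omega, by omega⟩
      exact ⟨a - a % 30 + 25, by omega, by omega, by omega, by omega, by omega⟩
    obtain ⟨s, h1, h2, h3, h4, h5⟩ := this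
    exact T s (by omega)
  by_cases r1 : 355 ≤ u
  · exact T 71 (by omega)
  by_cases r2 : 325 ≤ u
  · exact T 65 (by omega)
  by_cases r3 : 305 ≤ u
  · exact T 61 (by omega)
  by_cases r4 : 275 ≤ u
  · exact T 55 (by omega)
  by_cases r5 : 271 ≤ u
  · obtain rfl : u = 271 := by omega
    exact Gd.tdInf (oa6 (s := 45) (by norm_num) (by norm_num)) Gd_5_4_6
      (ih 46 (by omega) (by omega))
  by_cases r6 : 225 ≤ u
  · exact T 45 (by omega)
  by_cases r7 : 200 ≤ u
  · exact T 40 (by omega)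
  by_cases r8 : 175 ≤ u
  · exact T 35 (by omega)
  by_cases r9 : 155 ≤ u
  · exact T 31 (by omega)
  by_cases r10 : 151 ≤ u
  · obtain rfl : u = 151 := by omega
    exact D (M 121 (A 30 (by omega) (by omega)) (by omega) (by omega))
  by_cases r11 : 125 ≤ u
  · exact T 25 (by omega)
  by_cases r12 : 110 ≤ u
  · exact E (u - 110) (by omega) (by omega) (by omega)
  by_cases r13 : 80 ≤ u ∧ u ≤ 96
  · exact T 16 (by omega)
  by_cases r14 : 55 ≤ u ∧ u ≤ 66
  · exact T 11 (by omega)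
  have r15 : u < 110 := by omega
  interval_cases u <;> first | (exfalso; omega) | skip
  · exact Gd_zero 5 4
  · exact Gd_one 5 4
  · exact Gd_5_4_5
  · exact Gd_5_4_6
  · exact D Gd_5_1_41
  · exact D Gd_5_5_9.fill1
  · exact D Gd_5_1_61
  · exact D Gd_5_5_13.fill1
  · exact D Gd_5_1_81
  · exact Gd.pbd (A 5 (by omega) (by omega)) Gd_5_4_5
  · exact T 5 (by omega)
  · exact T 5 (by omega)
  · exact T 5 (by omega)
  · exact D (M 25 Gd_5_1_25 (by omega) (by omega))
  · exact D Gd_5_1_141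
  · exact D Gd_5_5_29.fill1
  · exact D Gd_5_1_161
  · exact Gd.pbd (A 10 (by omega) (by omega)) Gd_5_4_5
  · exact Gd.pbd (A 11 (by omega) (by omega)) Gd_5_4_5
  · exact Gd.tdInf (oa5 (s := 9) (by omega) (by omega)) Gd_5_4_5 (ih 10 (by omega) (by omega))
  · exact D (M1 40 Gd_5_1_41 (by omega) (by omega))
  · exact D (M 41 Gd_5_1_41 (by omega) (by omega))
  · exact D Gd_5_1_281
  · exact D Gd_5_5_57.fill1
  · exact D Gd_5_1_301
  · exact D (M 61 Gd_5_1_61 (by omega) (by omega))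
  · exact D (M1 80 Gd_5_1_81 (by omega) (by omega))
  · exact Gd.pbd (A 25 (by omega) (by omega)) Gd_5_4_5
  · exact Gd.pbd (A 26 (by omega) (by omega)) Gd_5_4_5
  · exact D (M 85 (A 21 (by omega) (by omega)) (by omega) (by omega))

theorem Gd.mulSize {κ m w u : ℕ} (h : Gd κ m u) (h' : Gd κ w κ) : Gd κ (m * w) u := by
  refine GDD.normalize (GDD.inflate h (by rintro n rfl; exact h')) (by simp) (fun g => ?_)
  let e : {v : (Fin u × Fin m) × Fin w // (Prod.fst ∘ Prod.fst) v = g} ≃ Fin m × Fin w :=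
    { toFun := fun v => (v.1.1.2, v.1.2)
      invFun := fun p => ⟨((g, p.1), p.2), rfl⟩
      left_inv := by rintro ⟨⟨⟨a, b⟩, c⟩, rfl⟩; rfl
      right_inv := fun p => rfl }
  rw [Nat.card_congr e]; simp

theorem Gd_4_8_4 : Gd 4 8 4 := (oa4 (by norm_num)).toGd
theorem Gd_4_4_4 : Gd 4 4 4 := (oa4 (by norm_num)).toGd

theorem Gd48_closure {S : Set ℕ} {V G : Type} [Finite V] [Finite G] {grp : V → G} (h : GDD S grp)
    (hS : ∀ n ∈ S, Gd 4 3 n) (hg : ∀ g, Gd 4 8 (3 * Nat.card {v // grp v = g} + 1)) {t : ℕ}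
    (ht : Nat.card V = t) : Gd 4 8 (3 * t + 1) := by
  have h1 := GDD.inflate h hS
  refine PBD.toGd (S := {n | Gd 4 8 n}) (V := Option (V × Fin 3)) (GDD.fillPBDInf (h1.mono ?_) ?_)
    (fun n hn => hn) ?_
  · rintro n rfl
    exact Gd_4_8_4
  · intro g
    let e : {v : V × Fin 3 // (grp ∘ Prod.fst) v = g} ≃ {v // grp v = g} × Fin 3 :=
      { toFun := fun v => (⟨v.1.1, v.2⟩, v.1.2)
        invFun := fun p => ⟨(p.1.1, p.2), p.1.2⟩
        left_inv := fun p => rfl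
        right_inv := fun p => rfl }
    rw [Nat.card_congr e, Nat.card_prod, mul_comm]
    simpa using hg g
  · rw [card_option]; simp [ht, mul_comm]

theorem Gd_4_8_7 : Gd 4 8 7 := Gd_4_2_7.mulSize Gd_4_4_4

theorem Gd_4_8_pbd {u : ℕ} (h : PBD {k | k ∈ [4, 7]} (Fin u)) : Gd 4 8 u := by
  refine PBD.toGd h ?_ (by simp)
  intro n hn
  have hn' : n = 4 ∨ n = 7 := by simpa using hn
  rcases hn' with rfl | rfl
  · exact Gd_4_8_4
  · exact Gd_4_8_7

theorem Gd_4_8_lift {m u : ℕ} (h : Gd 4 m u) (hm : Gd 4 8 (3 * m + 1)) :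
    Gd 4 8 (3 * (u * m) + 1) := by
  refine Gd48_closure h (by rintro n rfl; exact Gd_4_3_4) (fun g => ?_) (by simp)
  rwa [card_fst_fiber]

theorem Gd_4_8 (t : ℕ) : Gd 4 8 (3 * t + 1) := by
  induction t using Nat.strong_induction_on with
  | _ t ih =>
  have T : ∀ s h, (s < t ∧ h < t ∧ h ≤ s ∧ (s % 2 ≠ 0 ∨ s % 4 = 0) ∧ (s % 3 ≠ 0 ∨ s % 9 = 0) ∧
      t = 4 * s + h) → Gd 4 8 (3 * t + 1) := by
    rintro s h ⟨h1, h2, h3, h4, h4', h7⟩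
    obtain ⟨V, hV, grp, hg, hc, hf⟩ := (oa5 h4 h4').trunc h3
    refine Gd48_closure hg ?_ (fun g => ?_) (hc.trans h7.symm)
    · rintro n (rfl | rfl)
      · exact Gd_4_3_4
      · exact Gd_4_3_5
    · rcases hf g with e | e <;> rw [e]
      · exact ih s h1
      · exact ih h h2
  by_cases h01 : t % 4 = 0 ∨ t % 4 = 1
  · exact Gd.pbd (Gd.addInf (k := 4) (by norm_num) (Gd_4_3 t h01)) Gd_4_8_4
  by_cases hbig : 56 ≤ t
  · have : ∃ s, s ≤ t / 4 ∧ t / 4 ≤ s + 2 ∧ (s % 2 ≠ 0 ∨ s % 4 = 0) ∧ s % 3 ≠ 0 := by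
      have ha : 4 ≤ t / 4 := by omega
      generalize t / 4 = a at ha
      by_cases c1 : (a % 2 ≠ 0 ∨ a % 4 = 0) ∧ a % 3 ≠ 0
      · exact ⟨a, by omega, by omega, c1.1, c1.2⟩
      by_cases c2 : ((a - 1) % 2 ≠ 0 ∨ (a - 1) % 4 = 0) ∧ (a - 1) % 3 ≠ 0
      · exact ⟨a - 1, by omega, by omega, c2.1, c2.2⟩
      exact ⟨a - 2, by omega, by omega, by omega, by omega⟩
    obtain ⟨s, h1, h2, h3, h4⟩ := this
    exact T s (t - 4 * s) (by omega)
  · interval_cases t <;> first | (exfalso; omega) | skip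
    · exact Gd_4_8_7
    · exact Gd_4_8_10
    · exact Gd_4_2_19.mulSize Gd_4_4_4
    · exact Gd_4_8_pbd PBD_22
    · exact Gd_4_2_31.mulSize Gd_4_4_4
    · exact Gd_4_8_pbd PBD_34
    · exact Gd_4_8_lift Gd_4_2_7 Gd_4_8_7
    · exact Gd_4_8_lift Gd_4_3_5 Gd_4_8_10
    · exact T 4 2 (by omega)
    · exact T 4 3 (by omega)
    · exact T 5 2 (by omega)
    · exact T 5 3 (by omega)
    · exact Gd_4_8_lift Gd_4_2_13 Gd_4_8_7
    · exact Gd_4_8_lift Gd_4_3_9 Gd_4_8_10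
    · exact T 7 2 (by omega)
    · exact T 7 3 (by omega)
    · exact T 7 6 (by omega)
    · exact T 7 7 (by omega)
    · exact T 8 6 (by omega)
    · exact T 8 7 (by omega)
    · exact T 9 6 (by omega)
    · exact T 9 7 (by omega)
    · exact T 11 2 (by omega)
    · exact T 11 3 (by omega)
    · exact T 11 6 (by omega)
    · exact T 11 7 (by omega)
    · exact T 11 10 (by omega)
    · exact T 11 11 (by omega)

section LinAlg
open Matrix
open scoped ComplexOrder

/-- unit vectors (columns of a matrix) with all squared inner products equal to `1 / q` -/
def Equi (D N : ℕ) (q : ℝ) : Prop :=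
  ∃ Φ : Matrix (Fin D) (Fin N) ℂ, (∀ n, (Φᴴ * Φ) n n = 1) ∧
    ∀ n n', n ≠ n' → ‖(Φᴴ * Φ) n n'‖ ^ 2 * q = 1

theorem Equi.of_types {d n : Type} [Fintype d] [Fintype n] {D N : ℕ} {q : ℝ}
    (hd : Fintype.card d = D) (hn : Fintype.card n = N) (Φ : Matrix d n ℂ)
    (h1 : ∀ n, (Φᴴ * Φ) n n = 1)
    (h2 : ∀ n n', n ≠ n' → ‖(Φᴴ * Φ) n n'‖ ^ 2 * q = 1) : Equi D N q := by
  let e := Fintype.equivFinOfCardEq hd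
  let f := Fintype.equivFinOfCardEq hn
  have key : ∀ a b, ((Φ.submatrix e.symm f.symm)ᴴ * (Φ.submatrix e.symm f.symm)) a b =
      (Φᴴ * Φ) (f.symm a) (f.symm b) := by
    intro a b
    simp only [Matrix.mul_apply, Matrix.conjTranspose_apply, Matrix.submatrix_apply]
    exact Equiv.sum_comp e.symm (fun i => star (Φ i (f.symm a)) * Φ i (f.symm b))
  refine ⟨Φ.submatrix e.symm f.symm, fun a => ?_, fun a b hab => ?_⟩
  · rw [key]; exact h1 _
  · rw [key]; exact h2 _ _ (by simpa using hab)

theorem tight_of_welch {d n : Type} [Fintype d] [Fintype n] [DecidableEq d] (Φ : Matrix d n ℂ)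
    (s t : ℝ) (hd : 0 < Fintype.card d) (h1 : ∀ a, (Φᴴ * Φ) a a = (s : ℂ))
    (h2 : ∀ a b, a ≠ b → ‖(Φᴴ * Φ) a b‖ ^ 2 = t)
    (hw : ((Fintype.card n : ℝ) * s ^ 2 + (Fintype.card n : ℝ) * ((Fintype.card n : ℝ) - 1) * t)
      * (Fintype.card d : ℝ) = (Fintype.card n : ℝ) ^ 2 * s ^ 2) :
    Φ * Φᴴ = (((Fintype.card n : ℝ) * s / (Fintype.card d : ℝ) : ℝ) : ℂ) • (1 : Matrix d d ℂ) := by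
  classical
  set a : ℝ := (Fintype.card n : ℝ) * s / (Fintype.card d : ℝ) with ha
  have htr : (Φ * Φᴴ).trace = ((Fintype.card n * s : ℝ) : ℂ) := by
    rw [Matrix.trace_mul_comm, Matrix.trace]
    simp [Matrix.diag, h1]
  have htr2 : ((Φ * Φᴴ) * (Φ * Φᴴ)).trace =
      (((Fintype.card n : ℝ) * s ^ 2 + (Fintype.card n : ℝ) * ((Fintype.card n : ℝ) - 1) * t : ℝ) : ℂ) := by
    have e1 : ((Φ * Φᴴ) * (Φ * Φᴴ)).trace = ((Φᴴ * Φ)ᴴ * (Φᴴ * Φ)).trace := by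
      rw [Matrix.mul_assoc, Matrix.trace_mul_comm, Matrix.conjTranspose_mul,
        Matrix.conjTranspose_conjTranspose]
      simp only [Matrix.mul_assoc]
    rw [e1, Matrix.trace]
    have : ∀ x, Matrix.diag ((Φᴴ * Φ)ᴴ * (Φᴴ * Φ)) x =
        ((s ^ 2 + ((Fintype.card n : ℝ) - 1) * t : ℝ) : ℂ) := by
      intro x
      have h3 : ∀ y, star ((Φᴴ * Φ) y x) * (Φᴴ * Φ) y x =
          ((if y = x then s ^ 2 else t : ℝ) : ℂ) := by
        intro y
        have : star ((Φᴴ * Φ) y x) * (Φᴴ * Φ) y x = ((‖(Φᴴ * Φ) y x‖ ^ 2 : ℝ) : ℂ) := by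
          rw [Complex.star_def, Complex.conj_mul']; push_cast; rfl
        rw [this]
        split_ifs with hyx
        · rw [hyx, h1]; simp
        · rw [h2 _ _ hyx]
      rw [Matrix.diag, Matrix.mul_apply]
      simp only [Matrix.conjTranspose_apply] at h3 ⊢
      rw [Finset.sum_congr rfl (fun y _ => h3 y), ← Complex.ofReal_sum]
      congr 1
      have h9 : ∀ y, (if y = x then s ^ 2 else t) = t + (if y = x then s ^ 2 - t else 0) := by
        intro y; split_ifs <;> ring
      simp only [h9, Finset.sum_add_distrib, Finset.sum_const, Finset.sum_ite_eq', Finset.mem_univ,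
        if_true, Finset.card_univ, nsmul_eq_mul]
      ring
    rw [Finset.sum_congr rfl (fun x _ => this x)]
    simp only [Finset.sum_const, Finset.card_univ, nsmul_eq_mul]
    push_cast; ring
  rw [← sub_eq_zero, ← Matrix.trace_conjTranspose_mul_self_eq_zero_iff]
  have hH : (Φ * Φᴴ - (a : ℂ) • (1 : Matrix d d ℂ))ᴴ = Φ * Φᴴ - (a : ℂ) • (1 : Matrix d d ℂ) := by
    rw [Matrix.conjTranspose_sub, Matrix.conjTranspose_mul, Matrix.conjTranspose_conjTranspose,
      Matrix.conjTranspose_smul, Matrix.conjTranspose_one]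
    simp
  rw [hH, Matrix.sub_mul, Matrix.mul_sub, Matrix.mul_sub]
  simp only [Matrix.trace_sub, Matrix.smul_mul, Matrix.mul_smul, Matrix.one_mul, Matrix.mul_one,
    Matrix.trace_smul, htr, htr2, Matrix.trace_one, smul_eq_mul]
  have hd' : (Fintype.card d : ℝ) ≠ 0 := by positivity
  have hz : ((Fintype.card n : ℝ) * s ^ 2 + (Fintype.card n : ℝ) * ((Fintype.card n : ℝ) - 1) * t)
      - a * (Fintype.card n * s) - (a * (Fintype.card n * s) - a * (a * Fintype.card d)) = 0 := by
    have : a * Fintype.card d = Fintype.card n * s := by rw [ha]; field_simp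
    have h4 : ((Fintype.card n : ℝ) * s ^ 2 + (Fintype.card n : ℝ) * ((Fintype.card n : ℝ) - 1) * t)
      = a * (Fintype.card n * s) := by
      rw [← mul_left_inj' hd', hw, mul_right_comm, this]; ring
    rw [h4, this]; ring
  exact_mod_cast hz

theorem naimark {d n : Type} [Fintype d] [Fintype n] [DecidableEq d] [DecidableEq n]
    (Φ : Matrix d n ℂ) (a : ℝ) (ha : 0 < a) (hΦ : Φ * Φᴴ = (a : ℂ) • (1 : Matrix d d ℂ)) (D2 : ℕ)
    (hc : Fintype.card n = Fintype.card d + D2) :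
    ∃ Ψ : Matrix (Fin D2) n ℂ, Ψᴴ * Ψ = 1 - ((a⁻¹ : ℝ) : ℂ) • (Φᴴ * Φ) := by
  let v : d ⊕ Fin D2 → EuclideanSpace ℂ n := Sum.elim
    (fun i => WithLp.toLp 2 (fun x => (((Real.sqrt a)⁻¹ : ℝ) : ℂ) * star (Φ i x))) (fun _ => 0)
  have hsq : (Real.sqrt a)⁻¹ * (Real.sqrt a)⁻¹ = a⁻¹ := by
    rw [← mul_inv, Real.mul_self_sqrt ha.le]
  have hv : Orthonormal ℂ ((Set.range (Sum.inl : d → d ⊕ Fin D2)).domRestrict v) := by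
    rw [orthonormal_iff_ite]
    rintro ⟨_, i, rfl⟩ ⟨_, j, rfl⟩
    have h5 : (Φ * Φᴴ) i j = (a : ℂ) * (if i = j then 1 else 0) := by
      rw [hΦ]; simp [Matrix.one_apply]
    have h6 : inner ℂ (v (Sum.inl i)) (v (Sum.inl j)) = ((a⁻¹ : ℝ) : ℂ) * (Φ * Φᴴ) i j := by
      rw [← hsq]
      simp only [v, Sum.elim_inl, PiLp.inner_apply, RCLike.inner_apply, Matrix.mul_apply,
        Matrix.conjTranspose_apply, Finset.mul_sum]
      refine Finset.sum_congr rfl fun x _ => ?_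
      simp
      ring
    change inner ℂ (v (Sum.inl i)) (v (Sum.inl j)) = _
    rw [h6, h5]
    have hane : (a : ℂ) ≠ 0 := by exact_mod_cast ha.ne'
    by_cases hij : i = j
    · subst hij
      simp [hane]
    · rw [if_neg hij, if_neg (fun h => hij (Sum.inl_injective (congrArg Subtype.val h)))]
      simp
  obtain ⟨b, hb⟩ := hv.exists_orthonormalBasis_extension_of_card_eq (by simp [hc])
  refine ⟨Matrix.of fun k x => star (b (Sum.inr k) x), ?_⟩
  ext x y
  have h7 := b.sum_inner_mul_inner (EuclideanSpace.single x 1) (EuclideanSpace.single y 1)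
  rw [Fintype.sum_sum_type] at h7
  have h8 : ∀ i : d, b (Sum.inl i) = v (Sum.inl i) := fun i => hb _ ⟨i, rfl⟩
  simp only [h8, v, Sum.elim_inl] at h7
  simp [EuclideanSpace.inner_single_left, EuclideanSpace.inner_single_right] at h7
  simp only [Matrix.mul_apply, Matrix.conjTranspose_apply, Matrix.of_apply, Matrix.sub_apply,
    Matrix.smul_apply, smul_eq_mul, Matrix.one_apply]
  rw [eq_sub_iff_add_eq, add_comm, ← hsq, Finset.mul_sum]
  convert h7 using 2
  · refine Finset.sum_congr rfl fun i _ => ?_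
    simp; ring
  · simp
  · exact eq_comm

theorem Equi.of_raw {d n : Type} [Fintype d] [Fintype n] (Φ : Matrix d n ℂ) (D1 D2 N : ℕ)
    (S Q : ℝ) (hS : 0 < S) (hQ : 0 < Q)
    (hd : Fintype.card d = D1) (hn : Fintype.card n = N) (hN : N = D1 + D2)
    (hD1 : 0 < D1) (hD2 : 0 < D2)
    (h1 : ∀ a, (Φᴴ * Φ) a a = (S : ℂ)) (h2 : ∀ a b, a ≠ b → ‖(Φᴴ * Φ) a b‖ = 1)
    (hw : (S ^ 2 + (N - 1)) * D1 = N * S ^ 2)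
    (hq : D1 * Q = S * D2) : Equi D2 N (Q ^ 2) := by
  classical
  have hNpos : (0 : ℝ) < N := by rw [hN]; push_cast; positivity
  have hD1' : (0 : ℝ) < D1 := by positivity
  have hD2' : (0 : ℝ) < D2 := by positivity
  have htight := tight_of_welch Φ S 1 (by omega) h1
    (fun a b hab => by rw [h2 a b hab]; norm_num) (by
      rw [hd, hn]; linear_combination (N : ℝ) * hw)
  rw [hd, hn] at htight
  obtain ⟨Ψ, hΨ⟩ := naimark Φ _ (by positivity) htight D2 (by omega)
  have hsq : (Real.sqrt (N / D2)) * (Real.sqrt (N / D2)) = N / D2 :=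
    Real.mul_self_sqrt (by positivity)
  obtain ⟨c, hc⟩ : ∃ c, c = Real.sqrt (N / D2) := ⟨_, rfl⟩
  rw [← hc] at hsq
  have key : ∀ a b, (((c : ℂ) • Ψ)ᴴ * ((c : ℂ) • Ψ)) a b
      = ((N / D2 : ℝ) : ℂ) * ((1 : Matrix n n ℂ) a b - (((N * S / D1)⁻¹ : ℝ) : ℂ) * (Φᴴ * Φ) a b) := by
    intro a b
    rw [Matrix.conjTranspose_smul, Matrix.smul_mul, Matrix.mul_smul, hΨ, ← hsq]
    simp [mul_assoc]
  have hNr : (N : ℝ) = D1 + D2 := by rw [hN]; push_cast; ring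
  refine Equi.of_types (Fintype.card_fin D2) hn ((c : ℂ) • Ψ) ?_ ?_
  · intro a
    rw [key, h1, Matrix.one_apply_eq]
    norm_cast
    field_simp
    linarith
  · intro a b hab
    rw [key, Matrix.one_apply_ne hab, zero_sub, norm_mul, norm_neg, norm_mul, h2 a b hab,
      Complex.norm_real, Complex.norm_real, Real.norm_of_nonneg (by positivity),
      Real.norm_of_nonneg (by positivity)]
    have : (N / D2 : ℝ) * ((N * S / D1 : ℝ)⁻¹ * 1) * Q = 1 := by
      field_simp
      linarith
    calc _ = ((N / D2 : ℝ) * ((N * S / D1 : ℝ)⁻¹ * 1) * Q) ^ 2 := by ring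
      _ = 1 := by rw [this]; norm_num

end LinAlg

section Blocks
open Matrix

theorem gdd_blockvec {V G ρ J : Type} [Fintype V] [Fintype ρ] {grp : V → G} {K : ℕ} (hK : 2 ≤ K)
    (h : GDD {K} grp) (hR : ∀ x, Nat.card {y // grp y ≠ grp x} = Fintype.card ρ * (K - 1))
    (H : Matrix ρ J ℂ) (hH : ∀ r j, ‖H r j‖ = 1) :
    ∃ (ι : Type) (_ : Fintype ι) (β : Matrix ι (V × J) ℂ),
      Fintype.card ι * K = Fintype.card V * Fintype.card ρ ∧
      (∀ x x' j j', grp x ≠ grp x' → ‖(βᴴ * β) (x, j) (x', j')‖ = 1) ∧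
      (∀ x j j', (βᴴ * β) (x, j) (x, j') = (Hᴴ * H) j j') ∧
      (∀ x x' j j', x ≠ x' → grp x = grp x' → (βᴴ * β) (x, j) (x', j') = 0) := by
  classical
  obtain ⟨ι, hι, B, h1, h2, h3⟩ := h
  have := Fintype.ofFinite ι
  have hB : ∀ i, (B i).ncard = K := fun i => by simpa using h1 i
  have hrep : ∀ x, Fintype.card {i // x ∈ B i} = Fintype.card ρ := by
    intro x
    have e : {y // grp y ≠ grp x} ≃ (Σ i : {i // x ∈ B i}, {y // y ∈ B i.1 \ {x}}) :=
      { toFun := fun y => ⟨⟨(h3 x y.1 y.2.symm).choose, (h3 x y.1 y.2.symm).choose_spec.1.1⟩,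
          ⟨y.1, (h3 x y.1 y.2.symm).choose_spec.1.2, fun hh => y.2 (by rw [hh])⟩⟩
        invFun := fun p => ⟨p.2.1, fun hh => p.2.2.2 (h2 p.1.1 _ _ p.2.2.1 p.1.2 hh)⟩
        left_inv := fun y => rfl
        right_inv := by
          rintro ⟨⟨i, hi⟩, ⟨y, hy, hyx⟩⟩
          have hne : grp y ≠ grp x := fun hh => hyx (h2 i _ _ hy hi hh)
          have : (h3 x y hne.symm).choose = i :=
            ((h3 x y hne.symm).choose_spec.2 i ⟨hi, hy⟩).symm
          subst this
          rfl }
    have hc := Nat.card_congr e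
    rw [hR, Nat.card_sigma] at hc
    have hc2 : ∀ i : {i // x ∈ B i}, Nat.card {y // y ∈ B i.1 \ {x}} = K - 1 := by
      intro i
      change (B i.1 \ {x}).ncard = K - 1
      rw [Set.ncard_sdiff_singleton_of_mem i.2, hB]
    rw [Finset.sum_congr rfl (fun i _ => hc2 i)] at hc
    simp only [Finset.sum_const, Finset.card_univ, smul_eq_mul] at hc
    exact (Nat.eq_of_mul_eq_mul_right (by omega) hc).symm
  have e : ∀ x, {i // x ∈ B i} ≃ ρ := fun x => Fintype.equivOfCardEq (hrep x)
  refine ⟨ι, this, Matrix.of fun i p => if h : p.1 ∈ B i then H (e p.1 ⟨i, h⟩) p.2 else 0,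
    ?_, ?_, ?_, ?_⟩
  · have hs := Finset.sum_card_bipartiteAbove_eq_sum_card_bipartiteBelow (s := (Finset.univ : Finset ι))
      (t := (Finset.univ : Finset V)) (fun i x => x ∈ B i)
    have e1 : ∀ i, (Finset.bipartiteAbove (fun i x => x ∈ B i) (Finset.univ : Finset V) i).card = K := by
      intro i
      rw [← hB i, Set.ncard_eq_toFinset_card']
      congr 1; ext x; simp [Finset.bipartiteAbove]
    have e2 : ∀ x, (Finset.bipartiteBelow (fun i x => x ∈ B i) (Finset.univ : Finset ι) x).card
        = Fintype.card ρ := by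
      intro x
      rw [← hrep x, Fintype.card_subtype]
      rfl
    simpa [e1, e2] using hs
  · intro x x' j j' hne
    obtain ⟨i, ⟨hi, hi'⟩, hu⟩ := h3 x x' hne
    rw [Matrix.mul_apply, Finset.sum_eq_single i]
    · simp [hi, hi', hH]
    · intro k _ hk
      by_cases hx : x ∈ B k
      · by_cases hx' : x' ∈ B k
        · exact absurd (hu k ⟨hx, hx'⟩) hk
        · simp [hx']
      · simp [hx]
    · simp
  · intro x j j'
    rw [Matrix.mul_apply, Matrix.mul_apply, ← Equiv.sum_comp (e x)]
    rw [← Fintype.sum_subtype_add_sum_subtype (fun i => x ∈ B i)]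
    rw [Finset.sum_eq_zero (s := (Finset.univ : Finset {i // x ∉ B i})), add_zero]
    · refine Finset.sum_congr rfl fun i _ => ?_
      simp [i.2]
    · intro i _
      simp [i.2]
  · intro x x' j j' hne hg
    rw [Matrix.mul_apply]
    refine Finset.sum_eq_zero fun k _ => ?_
    by_cases hx : x ∈ B k
    · by_cases hx' : x' ∈ B k
      · exact absurd (h2 k _ _ hx hx' hg) hne
      · simp [hx']
    · simp [hx]

theorem dft (n : ℕ) [NeZero n] : ∃ F : Matrix (ZMod n) (ZMod n) ℂ, (∀ i j, ‖F i j‖ = 1) ∧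
    (∀ j, F 0 j = 1) ∧ ∀ j j', (Fᴴ * F) j j' = if j = j' then (n : ℂ) else 0 := by
  refine ⟨Matrix.of fun i j => ZMod.stdAddChar (i * j), ?_, ?_, ?_⟩
  · intro i j
    simp [AddChar.norm_apply]
  · intro j; simp
  · intro j j'
    have h := AddChar.sum_mulShift (j' - j) (ZMod.isPrimitive_stdAddChar n)
    rw [Matrix.mul_apply]
    simp only [Matrix.conjTranspose_apply, Matrix.of_apply]
    have h2 : ∀ i : ZMod n, star (ZMod.stdAddChar (i * j)) * ZMod.stdAddChar (i * j') =
        ZMod.stdAddChar (i * (j' - j)) := by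
      intro i
      rw [Complex.star_def, ← AddChar.map_neg_eq_conj, ← AddChar.map_add_eq_mul]
      congr 1; ring
    rw [Finset.sum_congr rfl (fun i _ => h2 i), h]
    simp [sub_eq_zero, eq_comm]

theorem simplex (n : ℕ) [NeZero n] : ∃ E : Matrix {z : ZMod n // z ≠ 0} (ZMod n) ℂ,
    (∀ i j, ‖E i j‖ = 1) ∧ ∀ j j', (Eᴴ * E) j j' = (if j = j' then (n : ℂ) else 0) - 1 := by
  obtain ⟨F, h1, h2, h3⟩ := dft n
  refine ⟨Matrix.of fun i j => F i.1 j, fun i j => h1 _ _, fun j j' => ?_⟩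
  rw [← h3, Matrix.mul_apply, Matrix.mul_apply,
    Fintype.sum_eq_add_sum_subtype_ne (fun i => Fᴴ j i * F i j') (0 : ZMod n)]
  simp [h2]

theorem card_ne_zero (n : ℕ) [NeZero n] : Fintype.card {z : ZMod n // z ≠ 0} = n - 1 := by
  rw [Fintype.card_subtype_compl]
  simp [ZMod.card]

theorem card_id_ne {V : Type} [Fintype V] (x : V) :
    Nat.card {y // (id y : V) ≠ id x} = Fintype.card V - 1 := by
  classical
  rw [Nat.card_eq_fintype_card, Fintype.card_subtype_compl]
  simp

theorem steiner (K R v : ℕ) (hK : 2 ≤ K) (hR : 1 ≤ R) (hv : v = R * (K - 1) + 1)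
    (h : PBD {K} (Fin v)) :
    ∃ D, D * K = v * (R * (K - 1) + K) ∧
      Equi D (v * (R + 1)) (((R * (K - 1) + K : ℕ) : ℝ) ^ 2) := by
  obtain ⟨E, hE1, hE2⟩ := simplex (R + 1)
  obtain ⟨ι, _, β, hb, h1, h2, h3⟩ := gdd_blockvec hK h (ρ := {z : ZMod (R + 1) // z ≠ 0})
    (by intro x; rw [card_id_ne, card_ne_zero, Fintype.card_fin, hv]; simp) E hE1
  rw [card_ne_zero, Fintype.card_fin, Nat.add_sub_cancel] at hb
  obtain ⟨k, rfl⟩ : ∃ k, K = k + 1 := ⟨K - 1, by omega⟩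
  simp only [Nat.add_sub_cancel] at *
  have hv0 : 0 < v := by omega
  have hle : Fintype.card ι < v * (R + 1) := by nlinarith
  obtain ⟨D, hD⟩ := Nat.exists_eq_add_of_le hle.le
  have hbp : 0 < Fintype.card ι := by
    rcases Nat.eq_zero_or_pos (Fintype.card ι) with h0 | h0
    · rw [h0] at hb; nlinarith
    · exact h0
  have hbr : (Fintype.card ι : ℝ) * (k + 1) = v * R := by exact_mod_cast hb
  have hvr : (v : ℝ) = R * k + 1 := by exact_mod_cast hv
  have hDr : (v : ℝ) * (R + 1) = Fintype.card ι + D := by exact_mod_cast hD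
  have hk : (k : ℝ) + 1 ≠ 0 := by positivity
  refine ⟨D, ?_, Equi.of_raw β (Fintype.card ι) D _ R _ (by positivity) (by positivity) rfl ?_ hD hbp
    (by omega) ?_ ?_ ?_ ?_⟩
  · have : (D : ℝ) * (k + 1) = v * (R * k + (k + 1)) := by linear_combination -(k+1) * hDr - hbr
    exact_mod_cast this
  · simp [ZMod.card]
  · rintro ⟨x, j⟩
    rw [h2, hE2]; simp
  · rintro ⟨x, j⟩ ⟨x', j'⟩ hne
    by_cases hx : x = x'
    · subst hx
      rw [h2, hE2, if_neg (fun hh => hne (by rw [hh]))]; simp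
    · exact h1 _ _ _ _ hx
  · rw [← mul_left_inj' hk]
    push_cast
    rw [mul_assoc, hbr, hvr]; ring
  · rw [← mul_left_inj' hk]
    push_cast
    linear_combination (R * k + (k+1)) * hbr + R * (k+1) * hDr + R * hbr

theorem tremain (r : ℕ) (hr : 1 ≤ r) (h : Gd 3 1 (2 * r + 1)) :
    ∃ D, D * 3 = (2 * r + 3) * (2 * r + 1) ∧
      Equi D ((r + 1) * (2 * r + 3)) (((2 * r + 1 : ℕ) : ℝ) ^ 2) := by
  classical
  obtain ⟨E, hE1, hE2⟩ := simplex (r + 1)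
  obtain ⟨F, hF1, hF2, hF3⟩ := dft (2 * r + 2)
  have hcV : Fintype.card {z : ZMod (2 * r + 2) // z ≠ 0} = 2 * r + 1 := by rw [card_ne_zero]; omega
  have h := PBD.ofGd' (V := {z : ZMod (2 * r + 2) // z ≠ 0}) h
    (by rw [Nat.card_eq_fintype_card, hcV])
  obtain ⟨ι, _, β, hb, h1, h2, h3⟩ := gdd_blockvec (by norm_num) h (ρ := {z : ZMod (r + 1) // z ≠ 0})
    (by intro x; rw [card_id_ne, hcV, card_ne_zero]; omega) E hE1
  rw [hcV, card_ne_zero, Nat.add_sub_cancel] at hb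
  have hle : Fintype.card ι + (2 * r + 2) < (r + 1) * (2 * r + 3) := by nlinarith
  obtain ⟨D, hD⟩ := Nat.exists_eq_add_of_le hle.le
  have hbr : (Fintype.card ι : ℝ) * 3 = (2 * r + 1) * r := by exact_mod_cast hb
  have hDr : ((r : ℝ) + 1) * (2 * r + 3) = Fintype.card ι + (2 * r + 2) + D := by exact_mod_cast hD
  have s2 : ((Real.sqrt 2 : ℝ) : ℂ) * ((Real.sqrt 2 : ℝ) : ℂ) = 2 := by
    rw [← Complex.ofReal_mul, Real.mul_self_sqrt (by norm_num)]; norm_num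
  have s2' : ((Real.sqrt 2 : ℝ) : ℂ) ≠ 0 := by
    intro h0; rw [h0] at s2; norm_num at s2
  have s3 : ((Real.sqrt (3 / 2) : ℝ) : ℂ) * ((Real.sqrt (3 / 2) : ℝ) : ℂ) = 3 / 2 := by
    rw [← Complex.ofReal_mul, Real.mul_self_sqrt (by norm_num)]; norm_num
  let V := {z : ZMod (2 * r + 2) // z ≠ 0}
  let w : ZMod (2 * r + 2) → ℝ := fun z => if z = 0 then Real.sqrt (3 / 2) else (Real.sqrt 2)⁻¹
  have hw2 : ∀ z, (w z : ℂ) * (w z : ℂ) = 1 / 2 + if z = 0 then 1 else 0 := by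
    intro z
    simp only [w]
    split_ifs
    · rw [s3]; norm_num
    · push_cast; rw [← mul_inv, s2]; norm_num
  let B : Matrix (ι ⊕ ZMod (2 * r + 2)) ((V × ZMod (r + 1)) ⊕ ZMod (2 * r + 2)) ℂ :=
    Matrix.fromBlocks β 0 (Matrix.of fun z p => if z = p.1.1 then ((Real.sqrt 2 : ℝ) : ℂ) else 0)
      (Matrix.of fun z j => (w z : ℂ) * F z j)
  have gll : ∀ p p', (Bᴴ * B) (Sum.inl p) (Sum.inl p') =
      (βᴴ * β) p p' + if p.1 = p'.1 then 2 else 0 := by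
    intro p p'
    simp only [B, Matrix.mul_apply, Fintype.sum_sum_type, Matrix.conjTranspose_apply,
      Matrix.fromBlocks_apply₁₁, Matrix.fromBlocks_apply₂₁, Matrix.of_apply]
    congr 1
    rw [Finset.sum_eq_single p.1.1]
    · by_cases hp : p.1 = p'.1
      · simp [hp, s2]
      · have : p.1.1 ≠ p'.1.1 := fun hh => hp (Subtype.ext hh)
        simp [hp, this]
    · intro z _ hz
      simp [hz]
    · simp
  have glr : ∀ p j, (Bᴴ * B) (Sum.inl p) (Sum.inr j) = F p.1.1 j := by
    intro p j
    simp only [B, Matrix.mul_apply, Fintype.sum_sum_type, Matrix.conjTranspose_apply,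
      Matrix.fromBlocks_apply₁₁, Matrix.fromBlocks_apply₂₁, Matrix.fromBlocks_apply₁₂,
      Matrix.fromBlocks_apply₂₂, Matrix.of_apply]
    rw [Finset.sum_eq_single (s := (Finset.univ : Finset (ZMod (2 * r + 2)))) p.1.1]
    · have : w p.1.1 = (Real.sqrt 2)⁻¹ := if_neg p.1.2
      rw [this]
      simp [s2']
    · intro z _ hz
      simp [hz]
    · simp
  have grr : ∀ j j', (Bᴴ * B) (Sum.inr j) (Sum.inr j') =
      1 / 2 * (if j = j' then ((2 * r + 2 : ℕ) : ℂ) else 0) + 1 := by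
    intro j j'
    rw [← hF3 j j']
    simp only [B, Matrix.mul_apply, Fintype.sum_sum_type, Matrix.conjTranspose_apply,
      Matrix.fromBlocks_apply₁₂, Matrix.fromBlocks_apply₂₂, Matrix.of_apply]
    have : ∀ z, star ((w z : ℂ) * F z j) * ((w z : ℂ) * F z j') =
        1 / 2 * (star (F z j) * F z j') + if z = 0 then 1 else 0 := by
      intro z
      have : star ((w z : ℂ) * F z j) * ((w z : ℂ) * F z j') =
        ((w z : ℂ) * (w z : ℂ)) * (star (F z j) * F z j') := by
        simp; ring
      rw [this, hw2]
      by_cases hz : z = 0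
      · subst hz; simp [hF2]
      · simp [hz]
    rw [Finset.sum_congr rfl (fun z _ => this z), Finset.sum_add_distrib, ← Finset.mul_sum]
    simp
  have gH : ∀ a b, (Bᴴ * B) a b = star ((Bᴴ * B) b a) := by
    intro a b
    rw [← Matrix.conjTranspose_apply, Matrix.conjTranspose_mul, Matrix.conjTranspose_conjTranspose]
  refine ⟨D, ?_, Equi.of_raw B (Fintype.card ι + (2 * r + 2)) D _ (r + 2) _ (by positivity)
    (by positivity) ?_ ?_ hD (by omega) (by omega) ?_ ?_ ?_ ?_⟩
  · have : (D : ℝ) * 3 = (2 * r + 3) * (2 * r + 1) := by linear_combination -3 * hDr - hbr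
    exact_mod_cast this
  · simp [ZMod.card]
  · rw [Fintype.card_sum, Fintype.card_prod, hcV, ZMod.card, ZMod.card]; ring
  · rintro (⟨x, j⟩ | j)
    · rw [gll, h2, hE2]; simp
    · rw [grr]; simp; ring
  · rintro (⟨x, j⟩ | j) (⟨x', j'⟩ | j') hne
    · rw [gll]
      by_cases hx : x = x'
      · subst hx
        rw [h2, hE2, if_neg (fun hh => hne (by rw [hh]))]; norm_num
      · simp only [hx, if_false, add_zero]
        exact h1 _ _ _ _ hx
    · rw [glr, hF1]
    · rw [gH, glr, norm_star, hF1]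
    · rw [grr, if_neg (fun hh => hne (by rw [hh]))]; simp
  · push_cast
    have : (Fintype.card ι : ℝ) = (2 * r + 1) * r / 3 := by linarith
    rw [this]; ring
  · push_cast
    have : (Fintype.card ι : ℝ) = (2 * r + 1) * r / 3 := by linarith
    rw [this] at hDr ⊢
    have : (D : ℝ) = (r + 1) * (2 * r + 3) - ((2 * r + 1) * r / 3 + (2 * r + 2)) := by linarith
    rw [this]; ring

/-- the 6 elements of a difference set in the elementary abelian group of order 16 -/
def seedSet : Fin 6 → ℕ := ![3, 7, 11, 12, 13, 14]

/-- a 6 by 16 sign matrix with 16 equiangular columns -/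
def seedSign (a : Fin 6) (p : Fin 8 × ZMod 2) : ℤ :=
  let c := Nat.land (seedSet a) (p.1.val + 8 * p.2.val)
  if (c.testBit 0 ^^ c.testBit 1 ^^ c.testBit 2 ^^ c.testBit 3) then -1 else 1

theorem seedSign_diag : ∀ p, ∑ a, seedSign a p * seedSign a p = 6 := by decide

theorem seedSign_off : ∀ p p', p ≠ p' → (∑ a, seedSign a p * seedSign a p') ^ 2 = 4 := by
  decide +kernel

theorem seed : ∃ S : Matrix (Fin 6) (Fin 8 × ZMod 2) ℂ, (∀ p, (Sᴴ * S) p p = 3) ∧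
    ∀ p p', p ≠ p' → ‖(Sᴴ * S) p p'‖ = 1 := by
  have s2 : (((Real.sqrt 2)⁻¹ : ℝ) : ℂ) * (((Real.sqrt 2)⁻¹ : ℝ) : ℂ) = 1 / 2 := by
    rw [← Complex.ofReal_mul, ← mul_inv, Real.mul_self_sqrt (by norm_num)]; norm_num
  obtain ⟨c, hc⟩ : ∃ c : ℝ, c = (Real.sqrt 2)⁻¹ := ⟨_, rfl⟩
  rw [← hc] at s2
  let S : Matrix (Fin 6) (Fin 8 × ZMod 2) ℂ := Matrix.of fun a p => (c : ℂ) * (seedSign a p : ℂ)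
  have key : ∀ p p', (Sᴴ * S) p p' = 1 / 2 * ((∑ a, seedSign a p * seedSign a p' : ℤ) : ℂ) := by
    intro p p'
    rw [← s2]
    push_cast
    rw [Finset.mul_sum, Matrix.mul_apply]
    refine Finset.sum_congr rfl fun a _ => ?_
    simp [S]; ring
  refine ⟨S, fun p => ?_, fun p p' hp => ?_⟩
  · rw [key, seedSign_diag]; norm_num
  · rw [key, norm_mul, Complex.norm_intCast]
    have h := seedSign_off p p' hp
    have h' : |((∑ a, seedSign a p * seedSign a p' : ℤ) : ℝ)| = 2 := by
      have h2 : ((∑ a, seedSign a p * seedSign a p' : ℤ) : ℝ) ^ 2 = 2 ^ 2 := by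
        rw [← Int.cast_pow, h]; norm_num
      rw [← abs_of_pos (show (0 : ℝ) < 2 by norm_num)]
      exact (sq_eq_sq_iff_abs_eq_abs _ _).1 h2
    rw [h']; norm_num

theorem card_fst_ne {u m : ℕ} (x : Fin u × Fin m) :
    Nat.card {y : Fin u × Fin m // y.1 ≠ x.1} = (u - 1) * m := by
  have e : {y : Fin u × Fin m // y.1 ≠ x.1} ≃ {a : Fin u // a ≠ x.1} × Fin m :=
    { toFun := fun y => (⟨y.1.1, y.2⟩, y.1.2)
      invFun := fun y => ⟨(y.1.1, y.2), y.1.2⟩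
      left_inv := fun _ => rfl
      right_inv := fun _ => rfl }
  rw [Nat.card_congr e, Nat.card_prod, Nat.card_eq_fintype_card, Fintype.card_subtype_compl]
  simp

theorem seeded (t : ℕ) (h : Gd 4 8 (3 * t + 1)) :
    Equi (2 * (3 * t + 1) * (24 * t + 5)) (8 * (3 * t + 1) * (8 * t + 2))
      (((24 * t + 5 : ℕ) : ℝ) ^ 2) := by
  classical
  obtain ⟨E, hE1, hE2⟩ := simplex (4 * t + 1)
  obtain ⟨F, hF1, hF2, hF3⟩ := dft 2
  obtain ⟨S, hS1, hS2⟩ := seed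
  let H : Matrix (ZMod 2 × {z : ZMod (4 * t + 1) // z ≠ 0}) (ZMod 2 × ZMod (4 * t + 1)) ℂ :=
    Matrix.of fun a b => F a.1 b.1 * E a.2 b.2
  have hH : ∀ b b', (Hᴴ * H) b b' = (Fᴴ * F) b.1 b'.1 * (Eᴴ * E) b.2 b'.2 := by
    intro b b'
    simp only [Matrix.mul_apply, Fintype.sum_prod_type, Finset.sum_mul_sum]
    refine Finset.sum_congr rfl fun a _ => Finset.sum_congr rfl fun a' _ => ?_
    simp [H]; ring
  obtain ⟨ι, _, β, hb, h1, h2, h3⟩ := gdd_blockvec (by norm_num) h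
    (ρ := ZMod 2 × {z : ZMod (4 * t + 1) // z ≠ 0})
    (by intro x; rw [card_fst_ne, Fintype.card_prod, card_ne_zero, ZMod.card]; omega) H
    (by intro r j; simp [H, hF1, hE1])
  rw [Fintype.card_prod, Fintype.card_prod, card_ne_zero, ZMod.card, Fintype.card_fin,
    Fintype.card_fin, Nat.add_sub_cancel] at hb
  have hb' : Fintype.card ι = (3 * t + 1) * 16 * t := by nlinarith
  let C : Matrix (Fin (3 * t + 1) × Fin 6)
      ((Fin (3 * t + 1) × Fin 8) × (ZMod 2 × ZMod (4 * t + 1))) ℂ :=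
    Matrix.of fun a b => if a.1 = b.1.1 then S a.2 (b.1.2, b.2.1) else 0
  have hC : ∀ b b', (Cᴴ * C) b b' =
      if b.1.1 = b'.1.1 then (Sᴴ * S) (b.1.2, b.2.1) (b'.1.2, b'.2.1) else 0 := by
    intro b b'
    rw [Matrix.mul_apply, Fintype.sum_prod_type, Finset.sum_eq_single b.1.1]
    · by_cases hbb : b.1.1 = b'.1.1
      · simp [C, hbb, Matrix.mul_apply]
      · simp [C, hbb]
    · intro z _ hz
      simp [C, hz]
    · simp
  have hG : ∀ b b', ((Matrix.fromRows β C)ᴴ * Matrix.fromRows β C) b b' =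
      (βᴴ * β) b b' + (Cᴴ * C) b b' := by
    intro b b'
    simp [Matrix.mul_apply]
  refine Equi.of_raw (Matrix.fromRows β C) (Fintype.card ι + (3 * t + 1) * 6) _ _ (8 * t + 3) _
    (by positivity) (by positivity) ?_ ?_ ?_ (by omega) (by positivity) ?_ ?_ ?_ ?_
  · simp
  · simp [ZMod.card]; ring
  · rw [hb']; ring
  · rintro ⟨⟨u, p⟩, ⟨i, m⟩⟩
    rw [hG, h2, hH, hC, hF3, hE2]
    simp [hS1]
    ring
  · rintro ⟨⟨u, p⟩, ⟨i, m⟩⟩ ⟨⟨u', p'⟩, ⟨i', m'⟩⟩ hne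
    rw [hG, hC]
    by_cases hu : u = u'
    · subst hu
      simp only [if_true]
      by_cases hp : p = p'
      · subst hp
        rw [h2, hH, hF3, hE2]
        by_cases hi : i = i'
        · subst hi
          have : m ≠ m' := fun hh => hne (by rw [hh])
          simp only [this, hS1, if_true, if_false]
          norm_num
        · simp only [hi, if_false, zero_mul, zero_add]
          exact hS2 _ _ (by simp [hi])
      · rw [h3 (u, p) (u, p') _ _ (fun hh => hp (congrArg Prod.snd hh)) rfl, zero_add]
        exact hS2 _ _ (by simp [hp])
    · simp only [hu, if_false, add_zero]
      exact h1 _ _ _ _ hu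
  · rw [hb']; push_cast; ring
  · rw [hb']; push_cast; ring

end Blocks

section CharSums

theorem gauss_norm {F : Type} [Field F] [Fintype F] {χ : MulChar F ℂ} (hχ : χ ≠ 1)
    {ψ : AddChar F ℂ} (hψ : ψ.IsPrimitive) : ‖gaussSum χ ψ‖ ^ 2 = Fintype.card F := by
  have h := gaussSum_mul_gaussSum_eq_card hχ hψ
  rw [← star_gaussSum_eq, Complex.star_def, Complex.mul_conj'] at h
  exact_mod_cast h

variable {k E : Type} [Field k] [Fintype k] [Field E] [Fintype E] [Algebra k E]

/-- restriction of a multiplicative character to a subfield -/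
noncomputable def resChar (k : Type) {E : Type} [Field k] [Field E] [Algebra k E]
    (χ : MulChar E ℂ) : MulChar k ℂ where
  toFun x := χ (algebraMap k E x)
  map_one' := by simp
  map_mul' := by simp
  map_nonunit' := by
    intro a ha
    have : a = 0 := by simpa using ha
    subst this
    simp only [map_zero]
    exact χ.map_nonunit (by simp)

theorem resChar_apply (χ : MulChar E ℂ) (x : k) : resChar k χ x = χ (algebraMap k E x) := rfl

open Classical in
/-- character sum over the trace-one hyperplane -/
noncomputable def trSum (k : Type) {E : Type} [Field k] [Field E] [Fintype E] [Algebra k E]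
    (χ : MulChar E ℂ) (c : k) : ℂ :=
  ∑ x with Algebra.trace k E x = c, χ x

theorem trSum_mul (χ : MulChar E ℂ) {c : k} (hc : c ≠ 0) :
    trSum k χ c = resChar k χ c * trSum k χ 1 := by
  classical
  have hc' : algebraMap k E c ≠ 0 := by simpa using hc
  rw [trSum, trSum, Finset.mul_sum]
  symm
  refine Finset.sum_bij (fun x _ => algebraMap k E c * x) ?_ ?_ ?_ ?_
  · intro x hx
    simp only [Finset.mem_filter, Finset.mem_univ, true_and] at hx ⊢
    rw [← Algebra.smul_def, map_smul, hx]; simp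
  · intro x _ y _ hxy
    exact mul_left_cancel₀ hc' hxy
  · intro y hy
    simp only [Finset.mem_filter, Finset.mem_univ, true_and] at hy
    refine ⟨algebraMap k E c⁻¹ * y, ?_, ?_⟩
    · simp only [Finset.mem_filter, Finset.mem_univ, true_and]
      rw [← Algebra.smul_def, map_smul, hy]; simp [hc]
    · rw [← mul_assoc, ← map_mul, mul_inv_cancel₀ hc]; simp
  · intro x _
    rw [map_mul, resChar_apply]

theorem sum_trace_fiber (χ : MulChar E ℂ) (f : k → ℂ) :
    ∑ x, χ x * f (Algebra.trace k E x) =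
      trSum k χ 0 * f 0 + trSum k χ 1 * ((∑ c, resChar k χ c * f c)) := by
  classical
  rw [← Finset.sum_fiberwise Finset.univ (fun x : E => Algebra.trace k E x)]
  have h1 : ∀ c : k, (∑ x with Algebra.trace k E x = c, χ x * f (Algebra.trace k E x)) =
      trSum k χ c * f c := by
    intro c
    rw [trSum, Finset.sum_mul]
    refine Finset.sum_congr rfl fun x hx => ?_
    simp only [Finset.mem_filter] at hx
    rw [hx.2]
  rw [Finset.sum_congr rfl (fun c _ => h1 c), Fintype.sum_eq_add_sum_subtype_ne _ (0 : k),
    Fintype.sum_eq_add_sum_subtype_ne (fun c => resChar k χ c * f c) (0 : k)]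
  have h2 : resChar k χ 0 = 0 := by rw [resChar_apply, map_zero]; exact χ.map_nonunit (by simp)
  rw [h2, zero_mul, zero_add, Finset.mul_sum]
  congr 1
  refine Finset.sum_congr rfl fun c _ => ?_
  rw [trSum_mul χ c.2]; ring

theorem trSum_norm {χ : MulChar E ℂ} (hχ : χ ≠ 1) :
    (resChar k χ ≠ 1 → ‖trSum k χ 1‖ ^ 2 * Fintype.card k = Fintype.card E) ∧
    (resChar k χ = 1 → ‖trSum k χ 1‖ ^ 2 * (Fintype.card k : ℝ) ^ 2 = Fintype.card E) := by
  classical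
  obtain ⟨ψ, hψ⟩ := AddChar.exists_apply_ne_zero.2 (one_ne_zero : (1 : k) ≠ 0)
  have hψ1 : ψ ≠ 1 := fun h => hψ (by rw [h]; simp)
  have hψp : ψ.IsPrimitive := AddChar.IsPrimitive.of_ne_one hψ1
  let Ψ : AddChar E ℂ := ψ.compAddMonoidHom (Algebra.trace k E).toAddMonoidHom
  have hΨ : Ψ ≠ 1 := by
    intro h
    obtain ⟨x, hx⟩ := Algebra.trace_surjective k E 1
    have : Ψ x = 1 := by rw [h]; simp
    apply hψ
    rw [← this, ← hx]; rfl
  have hΨp : Ψ.IsPrimitive := AddChar.IsPrimitive.of_ne_one hΨ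
  have hg := gauss_norm hχ hΨp
  have e1 : gaussSum χ Ψ = trSum k χ 0 + trSum k χ 1 * gaussSum (resChar k χ) ψ := by
    have := sum_trace_fiber χ (fun c => ψ c)
    simp only [AddChar.map_zero_eq_one, mul_one] at this
    exact this
  have e2 : 0 = trSum k χ 0 + trSum k χ 1 * ∑ c, resChar k χ c := by
    have := sum_trace_fiber χ (fun _ : k => 1)
    simp only [mul_one] at this
    rw [← this, MulChar.sum_eq_zero_of_ne_one hχ]
  constructor
  · intro hr
    rw [MulChar.sum_eq_zero_of_ne_one hr, mul_zero, add_zero] at e2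
    rw [e1, ← e2, zero_add, norm_mul, mul_pow, gauss_norm hr hψp] at hg
    exact hg
  · intro hr
    rw [hr, gaussSum_one_left hψ1] at e1
    rw [hr, MulChar.sum_one_eq_card_units] at e2
    have hcu : ((Fintype.card kˣ : ℕ) : ℂ) = Fintype.card k - 1 := by
      rw [Fintype.card_units, Nat.cast_sub Fintype.card_pos]; simp
    rw [hcu] at e2
    have e3 : gaussSum χ Ψ = - (trSum k χ 1 * Fintype.card k) := by
      rw [e1]; linear_combination -e2
    rw [e3, norm_neg, norm_mul, mul_pow, Complex.norm_natCast] at hg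
    exact hg

theorem mulChar_norm {F : Type} [Field F] [Fintype F] (χ : MulChar F ℂ) {x : F} (hx : x ≠ 0) :
    star (χ x) * χ x = 1 := by
  rw [MulChar.star_apply', ← MulChar.mul_apply, inv_mul_cancel]
  exact MulChar.one_apply (Ne.isUnit hx)

/-- a faithful character of a finite field -/
theorem exists_faithful (F : Type) [Field F] [Fintype F] : ∃ χ : MulChar F ℂ,
    orderOf χ = Fintype.card F - 1 ∧ ∀ x : Fˣ, χ x = 1 → x = 1 := by
  classical
  have hpos : Fintype.card F - 1 ≠ 0 := by
    have := Fintype.one_lt_card (α := F); omega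
  obtain ⟨χ, hχ⟩ := MulChar.exists_mulChar_orderOf F (dvd_refl (Fintype.card F - 1))
    (Complex.isPrimitiveRoot_exp _ hpos)
  refine ⟨χ, hχ, fun x hx => ?_⟩
  obtain ⟨g, hg⟩ := IsCyclic.exists_generator (α := Fˣ)
  obtain ⟨a, rfl⟩ := (Submonoid.mem_powers_iff _ _).1 (mem_powers_iff_mem_zpowers.2 (hg x))
  have h1 : χ ^ a = 1 := by
    rw [MulChar.eq_iff hg, MulChar.pow_apply_coe, MulChar.one_apply_coe, ← hx]
    push_cast
    rw [map_pow]
  have h2 : Fintype.card F - 1 ∣ a := by rw [← hχ]; exact orderOf_dvd_of_pow_eq_one h1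
  rw [← Fintype.card_units] at h2
  obtain ⟨b, rfl⟩ := h2
  rw [pow_mul, pow_card_eq_one, one_pow]

theorem card_trace_one {q J : ℕ} (hJ : 1 ≤ J) (hk : Fintype.card k = q)
    (hE : Fintype.card E = q ^ J) : Nat.card {x : E // Algebra.trace k E x = 1} = q ^ (J - 1) := by
  refine card_hom_fiber (Algebra.trace k E).toAddMonoidHom (Algebra.trace_surjective k E) ?_ 1
  rw [Nat.card_eq_fintype_card, Nat.card_eq_fintype_card, hk, hE, ← pow_succ']
  congr 1; omega

open Matrix in
theorem jstep_field {q J D N : ℕ} (hJ : 1 ≤ J) (hk : Fintype.card k = q)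
    (hE : Fintype.card E = q ^ J) (hN : N ≤ q - 1) (T : ℕ) (hT : (q - 1) * T = q ^ J - 1)
    (h : Equi D N (q : ℝ)) : Equi (D * q ^ (J - 1)) (N * T) ((q : ℝ) ^ J) := by
  classical
  obtain ⟨Φ, h1, h2⟩ := h
  obtain ⟨χ, hχ1, hχ2⟩ := exists_faithful E
  have hq : 1 < q := by rw [← hk]; exact Fintype.one_lt_card
  have hqr : (0 : ℝ) < q := by positivity
  let X := {x : E // Algebra.trace k E x = 1}
  have hX : Fintype.card X = q ^ (J - 1) := by
    rw [← card_trace_one hJ hk hE, Nat.card_eq_fintype_card]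
  have hX0 : ∀ x : X, x.1 ≠ 0 := by
    rintro ⟨x, hx⟩ rfl
    simp at hx
  let c : ℝ := (Real.sqrt ((q : ℝ) ^ (J - 1)))⁻¹
  have hc : (c : ℂ) * (c : ℂ) = (((q : ℝ) ^ (J - 1))⁻¹ : ℝ) := by
    rw [← Complex.ofReal_mul, ← mul_inv, Real.mul_self_sqrt (by positivity)]
  let ex : Fin N × Fin T → ℕ := fun p => p.1.val + (q - 1) * p.2.val
  have hex : ∀ p, ex p < orderOf χ := by
    rintro ⟨i, m⟩
    rw [hχ1, hE, ← hT]
    have := i.2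
    have := m.2
    simp only [ex]
    calc i.val + (q - 1) * m.val < (q - 1) + (q - 1) * m.val := by omega
      _ = (q - 1) * (m.val + 1) := by ring
      _ ≤ (q - 1) * T := Nat.mul_le_mul_left _ (by omega)
  have hexinj : ∀ p p', ex p = ex p' → p = p' := by
    rintro ⟨i, m⟩ ⟨i', m'⟩ hpp
    simp only [ex] at hpp
    have a1 : i.val < q - 1 := by omega
    have a2 : i'.val < q - 1 := by omega
    have b1 : i.val = i'.val := by
      have := congrArg (· % (q - 1)) hpp
      simpa [Nat.add_mul_mod_self_left, Nat.mod_eq_of_lt a1, Nat.mod_eq_of_lt a2] using this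
    have b2 : m.val = m'.val := by
      rw [b1] at hpp
      exact Nat.eq_of_mul_eq_mul_left (by omega) (Nat.add_left_cancel hpp)
    ext <;> simp [b1, b2]
  let M : Matrix (Fin D × X) (Fin N × Fin T) ℂ :=
    Matrix.of fun a p => Φ a.1 p.1 * ((c : ℂ) * (χ a.2.1) ^ ex p)
  have key : ∀ p p', (Mᴴ * M) p p' = (Φᴴ * Φ) p.1 p'.1 *
      ((((q : ℝ) ^ (J - 1))⁻¹ : ℝ) * ∑ x : X, star ((χ x.1) ^ ex p) * (χ x.1) ^ ex p') := by
    intro p p'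
    rw [← hc]
    rw [Matrix.mul_apply, Matrix.mul_apply, Fintype.sum_prod_type, Finset.mul_sum,
      Finset.sum_mul_sum]
    refine Finset.sum_congr rfl fun a _ => Finset.sum_congr rfl fun x _ => ?_
    simp [M]; ring
  have hsum : ∀ p p', ∑ x : X, star ((χ x.1) ^ ex p) * (χ x.1) ^ ex p' =
      trSum k ((χ ^ ex p)⁻¹ * χ ^ ex p') 1 := by
    intro p p'
    rw [trSum, Finset.sum_subtype (p := fun x => Algebra.trace k E x = 1) _ (by simp)]
    refine Finset.sum_congr rfl fun x _ => ?_
    rw [MulChar.mul_apply, ← MulChar.star_apply']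
    obtain ⟨u, hu⟩ := (hX0 x).isUnit
    rw [← hu, MulChar.pow_apply_coe, MulChar.pow_apply_coe]
  have hne : ∀ p p', p ≠ p' → (χ ^ ex p)⁻¹ * χ ^ ex p' ≠ 1 := by
    intro p p' hpp hh
    apply hpp
    apply hexinj
    rw [inv_mul_eq_one] at hh
    exact pow_injOn_Iio_orderOf (hex p) (hex p') hh
  refine Equi.of_types (d := Fin D × X) (n := Fin N × Fin T) (by simp [hX]) (by simp) M ?_ ?_
  · intro p
    rw [key, h1, one_mul]
    have : ∀ x : X, star ((χ x.1) ^ ex p) * (χ x.1) ^ ex p = 1 := by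
      intro x
      rw [star_pow, ← mul_pow, mulChar_norm χ (hX0 x), one_pow]
    rw [Finset.sum_congr rfl (fun x _ => this x), Finset.sum_const, Finset.card_univ, hX]
    have : (q : ℂ) ≠ 0 := by exact_mod_cast hqr.ne'
    push_cast
    simp [this]
  · rintro ⟨i, m⟩ ⟨i', m'⟩ hpp
    rw [key, hsum, norm_mul, norm_mul, Complex.norm_real, Real.norm_of_nonneg (by positivity)]
    have hpow : (q : ℝ) ^ J = q ^ (J - 1) * q := by rw [← pow_succ]; congr 1; omega
    have hEr : ((Fintype.card E : ℕ) : ℝ) = (q : ℝ) ^ (J - 1) * q := by rw [hE, ← hpow]; push_cast; rfl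
    obtain ⟨A, hA⟩ : ∃ A : ℝ, A = (q : ℝ) ^ (J - 1) := ⟨_, rfl⟩
    have hA0 : 0 < A := by rw [hA]; positivity
    obtain ⟨c1, c2⟩ := trSum_norm (k := k) (hne _ _ hpp)
    rw [hk, hEr, ← hA] at c1 c2
    rw [hpow, ← hA]
    generalize ‖trSum k ((χ ^ ex (i, m))⁻¹ * χ ^ ex (i', m')) 1‖ = t at *
    by_cases hi : i = i'
    · subst hi
      rw [h1, norm_one]
      have := c2 (by
        ext u
        rw [resChar_apply, MulChar.one_apply_coe, MulChar.mul_apply, ← MulChar.star_apply']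
        have hu : algebraMap k E u = ((Units.map (algebraMap k E).toMonoidHom u : Eˣ) : E) := rfl
        rw [hu, MulChar.pow_apply_coe, MulChar.pow_apply_coe, ← hu]
        simp only [ex]
        have hn := mulChar_norm χ (x := algebraMap k E u) (by simp)
        have hone : χ (algebraMap k E u) ^ (q - 1) = 1 := by
          rw [← map_pow, ← map_pow, ← hk, FiniteField.pow_card_sub_one_eq_one _ u.ne_zero]
          simp
        rw [pow_add, pow_add, pow_mul, pow_mul, hone]
        simp only [one_pow, mul_one]
        rw [star_pow, ← mul_pow, hn, one_pow])
      field_simp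
      nlinarith
    · have := c1 (by
        intro hh
        apply hi
        obtain ⟨g, hg⟩ := IsCyclic.exists_generator (α := kˣ)
        have hog : orderOf g = q - 1 := by
          rw [orderOf_eq_card_of_forall_mem_zpowers hg, Nat.card_eq_fintype_card,
            Fintype.card_units, hk]
        let g' : Eˣ := Units.map (algebraMap k E).toMonoidHom g
        have hg' : algebraMap k E g = (g' : E) := rfl
        have hone : χ (g' : E) ^ (q - 1) = 1 := by
          rw [← hg', ← map_pow, ← map_pow, ← hk, FiniteField.pow_card_sub_one_eq_one _ g.ne_zero]
          simp
        have h5 := congrArg (fun f => f (g : k)) hh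
        simp only [resChar_apply, MulChar.one_apply_coe, MulChar.mul_apply, ← MulChar.star_apply',
          hg', MulChar.pow_apply_coe] at h5
        simp only [ex] at h5
        rw [pow_add, pow_add, pow_mul, pow_mul, hone, one_pow, one_pow, mul_one, mul_one] at h5
        have hn := mulChar_norm χ (x := (g' : E)) g'.ne_zero
        have h6 : χ (g' : E) ^ i'.val = χ (g' : E) ^ i.val := by
          have h7 : χ (g' : E) ^ i.val * star (χ (g' : E) ^ i.val) = 1 := by
            rw [star_pow, mul_comm, ← mul_pow, hn, one_pow]
          calc _ = (χ (g' : E) ^ i.val * star (χ (g' : E) ^ i.val)) * χ (g' : E) ^ i'.val := by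
                rw [h7, one_mul]
            _ = χ (g' : E) ^ i.val := by rw [mul_assoc, h5, mul_one]
        have hinj : ∀ a b, a ≤ b → χ (g' : E) ^ b = χ (g' : E) ^ a → g ^ a = g ^ b := by
          intro a b hab he
          obtain ⟨d, rfl⟩ := Nat.exists_eq_add_of_le hab
          have hz : χ (g' : E) ^ a ≠ 0 := by
            apply pow_ne_zero
            intro h0
            rw [h0] at hn; simp at hn
          rw [pow_add] at he
          have h8 : χ (g' : E) ^ d = 1 := mul_left_cancel₀ hz (by rw [he, mul_one])
          have h9 : g' ^ d = 1 := hχ2 _ (by push_cast; rw [map_pow]; exact h8)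
          have h10 : g ^ d = 1 := by
            apply Units.ext
            apply (algebraMap k E).injective
            have := congrArg Units.val h9
            rw [Units.val_pow_eq_pow_val] at this ⊢
            rw [map_pow, hg', this]; simp
          rw [pow_add, h10, mul_one]
        have h11 : g ^ i.val = g ^ i'.val := by
          rcases le_total i.val i'.val with hl | hl
          · exact hinj _ _ hl h6
          · exact (hinj _ _ hl h6.symm).symm
        have := pow_injOn_Iio_orderOf (x := g) (show i.val < orderOf g by rw [hog]; omega)
          (show i'.val < orderOf g by rw [hog]; omega) h11
        exact Fin.ext this)
      have hG := h2 i i' hi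
      have ht : t ^ 2 = A := by
        have : t ^ 2 * q = A * q := this
        exact mul_right_cancel₀ hqr.ne' this
      calc _ = (‖(Φᴴ * Φ) i i'‖ ^ 2 * q) * (A⁻¹ ^ 2 * t ^ 2 * A) := by ring
        _ = 1 := by rw [hG, ht]; field_simp

end CharSums

theorem jstep {q J D N : ℕ} (hq : IsPrimePow q) (hJ : 1 ≤ J) (hN : N ≤ q - 1) (T : ℕ)
    (hT : (q - 1) * T = q ^ J - 1) (h : Equi D N (q : ℝ)) :
    Equi (D * q ^ (J - 1)) (N * T) ((q : ℝ) ^ J) := by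
  obtain ⟨p, e, hp, he, rfl⟩ := (isPrimePow_nat_iff _).1 hq
  have : Fact p.Prime := ⟨hp⟩
  have : NeZero J := ⟨by omega⟩
  let k := GaloisField p e
  have : Fintype k := Fintype.ofFinite k
  have hk : Fintype.card k = p ^ e := by
    rw [← Nat.card_eq_fintype_card]; exact GaloisField.card p e he.ne'
  have : Fintype (FiniteField.Extension k p J) := Fintype.ofFinite _
  refine jstep_field (k := k) (E := FiniteField.Extension k p J) hJ hk ?_ hN T hT h
  rw [← Nat.card_eq_fintype_card, FiniteField.natCard_extension, Nat.card_eq_fintype_card, hk]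

open Matrix in
theorem Equi.etf {D N : ℕ} {c : ℝ} (hc : 0 < c) (hD : 0 < D) (h : Equi D N c)
    (hw : (c + N - 1) * D = N * c) :
    ∃ φ : Fin N → EuclideanSpace ℂ (Fin D), IsETF D N φ := by
  obtain ⟨Φ, h1, h2⟩ := h
  have hD' : (0 : ℝ) < D := by positivity
  have h2' : ∀ a b, a ≠ b → ‖(Φᴴ * Φ) a b‖ ^ 2 = 1 / c := by
    intro a b hab
    rw [eq_div_iff hc.ne', h2 a b hab]
  have ht := tight_of_welch Φ 1 (1 / c) (by simpa using hD) (by simpa using h1) h2' (by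
    simp only [Fintype.card_fin]
    field_simp
    linear_combination (N : ℝ) * hw)
  simp only [Fintype.card_fin, mul_one] at ht
  have hin : ∀ a b, inner ℂ (WithLp.toLp 2 (fun i => Φ i a) : EuclideanSpace ℂ (Fin D))
      (WithLp.toLp 2 (fun i => Φ i b)) = (Φᴴ * Φ) a b := by
    intro a b
    simp only [PiLp.inner_apply, RCLike.inner_apply, Matrix.mul_apply, Matrix.conjTranspose_apply]
    refine Finset.sum_congr rfl fun i _ => ?_
    rw [mul_comm]; rfl
  refine ⟨fun n => WithLp.toLp 2 (fun i => Φ i n), ?_, ?_, ?_⟩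
  · intro n
    have h3 : ‖(WithLp.toLp 2 (fun i => Φ i n) : EuclideanSpace ℂ (Fin D))‖ ^ 2 = 1 := by
      rw [← inner_self_eq_norm_sq (𝕜 := ℂ), hin n n, h1]
      simp
    exact (pow_eq_one_iff_of_nonneg (norm_nonneg _) (by norm_num)).1 h3
  · intro a b hab
    rw [hin, h2' a b hab]
    have hN : 1 < N := by
      have := a.2; have := b.2
      have : a.val ≠ b.val := fun hh => hab (Fin.ext hh)
      omega
    have hN' : (N : ℝ) - 1 ≠ 0 := by
      have : (1 : ℝ) < N := by exact_mod_cast hN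
      linarith
    rw [div_eq_div_iff hc.ne' (by positivity)]
    linear_combination hw
  · intro y
    ext i
    have h4 := congrFun (congrArg (fun M => M *ᵥ (fun j => y j)) ht) i
    simp only [Matrix.smul_mulVec, Matrix.one_mulVec, ← Matrix.mulVec_mulVec, Pi.smul_apply,
      smul_eq_mul] at h4
    push_cast at h4
    simp only [WithLp.ofLp_sum, Finset.sum_apply, PiLp.smul_apply, smul_eq_mul]
    rw [← h4, Matrix.mulVec, dotProduct]
    refine Finset.sum_congr rfl fun n _ => ?_
    rw [mul_comm]
    congr 1
    simp only [PiLp.inner_apply, RCLike.inner_apply, Matrix.mulVec, dotProduct,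
      Matrix.conjTranspose_apply]
    refine Finset.sum_congr rfl fun j _ => ?_
    rw [mul_comm]; rfl

theorem PBD_two (v : ℕ) : PBD {2} (Fin v) := by
  refine ⟨{s : Finset (Fin v) // s.card = 2}, inferInstance, fun s => (s.1 : Set (Fin v)), ?_, ?_, ?_⟩
  · intro s
    simp [s.2]
  · intro i x y _ _ h
    exact h
  · intro x y hxy
    have hxy : x ≠ y := hxy
    refine ⟨⟨{x, y}, Finset.card_pair hxy⟩, by simp, ?_⟩
    rintro ⟨s, hs⟩ ⟨hx, hy⟩
    apply Subtype.ext
    symm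
    apply Finset.eq_of_subset_of_card_le
    · intro z hz
      simp only [Finset.mem_insert, Finset.mem_singleton] at hz
      rcases hz with rfl | rfl
      · exact hx
      · exact hy
    · rw [hs, Finset.card_pair hxy]

theorem base_steiner (K R Q : ℕ) (hK : 2 ≤ K) (hR : 1 ≤ R) (hQ : Q = R * (K - 1) + K)
    (h : PBD {K} (Fin (R * (K - 1) + 1))) :
    ∃ D N : ℕ, (D : ℤ) * K = ((Q : ℤ) - (K - 1) * 1) * Q ∧
      (N : ℤ) * (K - 1) = ((Q : ℤ) - (K - 1) * 1) * (Q - 1) ∧ N ≤ Q ^ 2 - 1 ∧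
      Equi D N ((Q : ℝ) ^ 2) := by
  obtain ⟨D, hD, hE⟩ := steiner K R _ hK hR rfl h
  rw [← hQ] at hD hE
  obtain ⟨k, rfl⟩ : ∃ k, K = k + 1 := ⟨K - 1, by omega⟩
  simp only [Nat.add_sub_cancel] at *
  refine ⟨D, _, ?_, ?_, ?_, hE⟩
  · have : (D : ℤ) * ((k + 1 : ℕ) : ℤ) = ((R * k + 1 : ℕ) : ℤ) * Q := by exact_mod_cast hD
    rw [this, hQ]; push_cast; ring
  · rw [hQ]; push_cast; ring
  · have h1 : (R * k + 1) * (R + 1) + 1 ≤ Q ^ 2 := by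
      have hk : 1 ≤ k := by omega
      obtain ⟨j, rfl⟩ := Nat.exists_eq_add_of_le hk
      rw [hQ]; nlinarith [Nat.zero_le (R * j), Nat.zero_le (R * R * j), Nat.zero_le (R * R * j * j)]
    omega

theorem base (K : ℕ) (hK : 2 ≤ K) (L : ℤ) (Q : ℕ)
    (hcases :
      (L = 1 ∧ (K = 2 ∨ K = 3 ∨ K = 4 ∨ K = 5) ∧ K ^ 2 ≤ Q ∧
        (Q ≡ K [MOD K * (K - 1)] ∨ Q ≡ 2 * K - 1 [MOD K * (K - 1)])) ∨
      (L = 1 ∧ Q = K) ∨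
      (L = -1 ∧ K = 3 ∧ 7 ≤ Q ∧ (Q ≡ 1 [MOD 6] ∨ Q ≡ 3 [MOD 6])) ∨
      (L = -1 ∧ K = 4 ∧ Q ≡ 5 [MOD 24])) :
    ∃ D N : ℕ, (D : ℤ) * K = ((Q : ℤ) - (K - 1) * L) * Q ∧
      (N : ℤ) * (K - 1) = ((Q : ℤ) - (K - 1) * L) * (Q - L) ∧ N ≤ Q ^ 2 - 1 ∧
      Equi D N ((Q : ℝ) ^ 2) := by
  rcases hcases with ⟨rfl, hk, hQ, hm⟩ | ⟨rfl, rfl⟩ | ⟨rfl, rfl, hQ, hm⟩ | ⟨rfl, rfl, hm⟩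
  · rcases hk with rfl | rfl | rfl | rfl
    · exact base_steiner 2 (Q - 2) Q (by norm_num) (by omega) (by omega) (PBD_two _)
    · have hm' : Q % 6 = 3 ∨ Q % 6 = 5 := by simpa [Nat.ModEq] using hm
      refine base_steiner 3 ((Q - 3) / 2) Q (by norm_num) (by omega) (by omega) ?_
      have := (Gd_3_2 ((Q - 3) / 2) (by omega))
      have := PBD.ofGd (Gd.addInf (k := 3) (by norm_num) this)
      rwa [mul_comm (3 - 1)] at this
    · have hm' : Q % 12 = 4 ∨ Q % 12 = 7 := by simpa [Nat.ModEq] using hm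
      refine base_steiner 4 ((Q - 4) / 3) Q (by norm_num) (by omega) (by omega) ?_
      have := (Gd_4_3 ((Q - 4) / 3) (by omega))
      have := PBD.ofGd (Gd.addInf (k := 4) (by norm_num) this)
      rwa [mul_comm (4 - 1)] at this
    · have hm' : Q % 20 = 5 ∨ Q % 20 = 9 := by simpa [Nat.ModEq] using hm
      refine base_steiner 5 ((Q - 5) / 4) Q (by norm_num) (by omega) (by omega) ?_
      have := (Gd_5_4 ((Q - 5) / 4) (by omega))
      have := PBD.ofGd (Gd.addInf (k := 5) (by norm_num) this)
      rwa [mul_comm (5 - 1)] at this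
  · refine ⟨1, 1, by ring, by ring, ?_, 1, ?_, ?_⟩
    · have : 2 ^ 2 ≤ Q ^ 2 := Nat.pow_le_pow_left hK 2
      omega
    · intro n; simp
    · intro n n' hn
      exact absurd (Subsingleton.elim n n') hn
  · have hm' : Q % 6 = 1 ∨ Q % 6 = 3 := by simpa [Nat.ModEq] using hm
    obtain ⟨r, rfl⟩ : ∃ r, Q = 2 * r + 1 := ⟨(Q - 1) / 2, by omega⟩
    obtain ⟨D, hD, hE⟩ := tremain r (by omega)
      (Gd.addInf (k := 3) (by norm_num) (Gd_3_2 r (by omega)))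
    refine ⟨D, _, ?_, ?_, ?_, hE⟩
    · have : (D : ℤ) * 3 = (2 * r + 3) * (2 * r + 1) := by exact_mod_cast hD
      push_cast; rw [this]; ring
    · push_cast; ring
    · have : (r + 1) * (2 * r + 3) + 1 ≤ (2 * r + 1) ^ 2 := by nlinarith
      omega
  · have hm' : Q % 24 = 5 := by simpa [Nat.ModEq] using hm
    obtain ⟨t, rfl⟩ : ∃ t, Q = 24 * t + 5 := ⟨Q / 24, by omega⟩
    refine ⟨_, _, ?_, ?_, ?_, seeded t (Gd_4_8 t)⟩
    · push_cast; ring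
    · push_cast; ring
    · have : 8 * (3 * t + 1) * (8 * t + 2) + 1 ≤ (24 * t + 5) ^ 2 := by nlinarith
      omega

/-- let `K ≥ 2`, `L ∈ {1,−1}`, and let `Q` be a prime power satisfying one
of the conditions (i)–(iv). Then for every `J ≥ 1` there exists an
`ETF(D⁽ᴶ⁾, N⁽ᴶ⁾)` in `ℂ^{D⁽ᴶ⁾}`, where `D⁽ᴶ⁾ = (1/K)·[Q−(K−1)L]·Q^{2J−1}` and
`N⁽ᴶ⁾ = ([Q−(K−1)L]/(K−1))·(Q^{2J}−1)/(Q+L)` (these being the positive integers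
determined by the stated cross-multiplied identities). -/
theorem stmt16 (K : ℕ) (hK : 2 ≤ K) (L : ℤ) (hL : L = 1 ∨ L = -1)
    (Q : ℕ) (hpp : IsPrimePow Q)
    (hcases :
      (L = 1 ∧ (K = 2 ∨ K = 3 ∨ K = 4 ∨ K = 5) ∧ K ^ 2 ≤ Q ∧
        (Q ≡ K [MOD K * (K - 1)] ∨ Q ≡ 2 * K - 1 [MOD K * (K - 1)])) ∨
      (L = 1 ∧ Q = K) ∨
      (L = -1 ∧ K = 3 ∧ 7 ≤ Q ∧ (Q ≡ 1 [MOD 6] ∨ Q ≡ 3 [MOD 6])) ∨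
      (L = -1 ∧ K = 4 ∧ Q ≡ 5 [MOD 24])) :
    ∀ J : ℕ, 1 ≤ J →
      ∃ DJ NJ : ℕ,
        (DJ : ℤ) * K = ((Q : ℤ) - (K - 1) * L) * (Q : ℤ) ^ (2 * J - 1) ∧
        (NJ : ℤ) * (((K : ℤ) - 1) * ((Q : ℤ) + L)) =
          ((Q : ℤ) - (K - 1) * L) * ((Q : ℤ) ^ (2 * J) - 1) ∧
        ∃ φ : Fin NJ → EuclideanSpace ℂ (Fin DJ), IsETF DJ NJ φ := by
  intro J hJ
  have hQ2 : 2 ≤ Q := hpp.two_le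
  have hL2 : L * L = 1 := by rcases hL with rfl | rfl <;> norm_num
  obtain ⟨D, N, hD, hN, hle, hE⟩ := base K hK L Q hcases
  have hA : 1 ≤ (Q : ℤ) - (K - 1) * L := by
    rcases hcases with ⟨rfl, hk, hQ, _⟩ | ⟨rfl, rfl⟩ | ⟨rfl, rfl, _, _⟩ | ⟨rfl, rfl, _⟩
    · have : (K : ℤ) ^ 2 ≤ Q := by exact_mod_cast hQ
      have : (2 : ℤ) ≤ K := by exact_mod_cast hK
      nlinarith
    · ring_nf; norm_num
    · push_cast; omega
    · push_cast; omega
  have hD0 : 0 < D := by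
    rcases Nat.eq_zero_or_pos D with h0 | h0
    · rw [h0] at hD
      have : (0 : ℤ) < ((Q : ℤ) - (K - 1) * L) * Q := by positivity
      simp at hD; omega
    · exact h0
  obtain ⟨T, hT⟩ : ∃ T, (Q ^ 2 - 1) * T = (Q ^ 2) ^ J - 1 := by
    obtain ⟨T, hT⟩ := Nat.sub_one_dvd_pow_sub_one (Q ^ 2) J
    exact ⟨T, hT.symm⟩
  have hq1 : 1 ≤ Q ^ 2 := Nat.one_le_pow _ _ (by omega)
  have hTz : ((Q : ℤ) ^ 2 - 1) * T = ((Q : ℤ) ^ 2) ^ J - 1 := by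
    have h1 : 1 ≤ (Q ^ 2) ^ J := Nat.one_le_pow _ _ (by omega)
    have := congrArg (Nat.cast : ℕ → ℤ) hT
    rw [Nat.cast_mul, Nat.cast_sub hq1, Nat.cast_sub h1] at this
    exact_mod_cast this
  have hpow : (Q : ℤ) ^ (2 * J - 1) = Q * ((Q : ℤ) ^ 2) ^ (J - 1) := by
    rw [← pow_mul, ← pow_succ']; congr 1; omega
  have hEJ := jstep (J := J) (hpp.pow (by norm_num : (2 : ℕ) ≠ 0)) hJ hle T hT
    (by push_cast; exact hE)
  refine ⟨D * (Q ^ 2) ^ (J - 1), N * T, ?_, ?_, ?_⟩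
  · rw [hpow]; push_cast
    linear_combination ((Q : ℤ) ^ 2) ^ (J - 1) * hD
  · rw [pow_mul]; push_cast
    linear_combination T * (Q + L) * hN + (Q - (K - 1) * L) * hTz
      - T * (Q - (K - 1) * L) * hL2
  · refine Equi.etf (c := ((Q ^ 2 : ℕ) : ℝ) ^ J) (by positivity) (by positivity) hEJ ?_
    have hw : ((Q : ℤ) ^ 2 - 1 + N) * D = N * (Q : ℤ) ^ 2 := by
      have hK0 : (K : ℤ) * (K - 1) ≠ 0 := by
        have : (2 : ℤ) ≤ K := by exact_mod_cast hK
        exact mul_ne_zero (by omega) (by omega)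
      rw [← mul_left_inj' hK0]
      linear_combination (((Q : ℤ) ^ 2 - 1) * (K - 1) + N * (K - 1)) * hD
        + (((Q : ℤ) - (K - 1) * L) * Q - K * (Q : ℤ) ^ 2) * hN
        + ((Q : ℤ) * (K - 1) * ((Q : ℤ) - (K - 1) * L)) * hL2
    have hwr : ((Q : ℝ) ^ 2 - 1 + N) * D = N * (Q : ℝ) ^ 2 := by exact_mod_cast hw
    have hTr : ((Q : ℝ) ^ 2 - 1) * T = ((Q : ℝ) ^ 2) ^ J - 1 := by exact_mod_cast hTz
    have hpr : ((Q : ℝ) ^ 2) ^ J = (Q : ℝ) ^ 2 * ((Q : ℝ) ^ 2) ^ (J - 1) := by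
      rw [← pow_succ']; congr 1; omega
    push_cast
    calc (((Q : ℝ) ^ 2) ^ J + N * T - 1) * (D * ((Q : ℝ) ^ 2) ^ (J - 1))
        = (((Q : ℝ) ^ 2) ^ J - 1 + N * T) * (D * ((Q : ℝ) ^ 2) ^ (J - 1)) := by ring
      _ = N * T * ((Q : ℝ) ^ 2 * ((Q : ℝ) ^ 2) ^ (J - 1)) := by
          rw [← hTr]; linear_combination T * ((Q : ℝ) ^ 2) ^ (J - 1) * hwr
      _ = _ := by rw [← hpr]
end

section
/- Let Q ≥ 2 be a prime power. Then the maximal number of mutually unbiased complex ETF(Q,Q+1) equals Q−1: there exists an MUETF(Q, Q+1, Q−1) in ℂ^Q, and no MUETF(Q, Q+1, M) exists in ℂ^Q with M > Q−1. -/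
open scoped BigOperators

/-- A doubly-indexed family `(ψ m n)` of unit vectors is an `MUETF(D,N,M)`:
`M` mutually unbiased `ETF(D,N)`. -/
def IsMUETF {μ ν E : Type*} [NormedAddCommGroup E] [InnerProductSpace ℂ E]
    (D N : ℕ) (ψ : μ → ν → E) : Prop :=
  (∀ m n, ‖ψ m n‖ = 1) ∧
  (∀ m n n', n ≠ n' →
    ‖(inner ℂ (ψ m n) (ψ m n') : ℂ)‖ ^ 2 = ((N : ℝ) - D) / (D * ((N : ℝ) - 1))) ∧
  (∀ m m' n n', m ≠ m' → ‖(inner ℂ (ψ m n) (ψ m' n') : ℂ)‖ ^ 2 = 1 / (D : ℝ))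

/-- rank one operator attached to a vector -/
noncomputable def rankOneMat {Q : ℕ} (v : EuclideanSpace ℂ (Fin Q)) : Matrix (Fin Q) (Fin Q) ℂ :=
  Matrix.of fun i j => v i * star (v j)

lemma trace_rankOneMat_mul {Q : ℕ} (v w : EuclideanSpace ℂ (Fin Q)) :
    (rankOneMat v * rankOneMat w).trace = ((‖(inner ℂ v w : ℂ)‖ ^ 2 : ℝ) : ℂ) := by
  have h : ((‖(inner ℂ v w : ℂ)‖ ^ 2 : ℝ) : ℂ) = inner ℂ v w * star (inner ℂ v w : ℂ) := by
    push_cast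
    exact (Complex.mul_conj' _).symm
  rw [h]
  simp only [PiLp.inner_apply, RCLike.inner_apply, star_sum, Finset.sum_mul_sum, Matrix.trace,
    Matrix.diag, Matrix.mul_apply, rankOneMat, Matrix.of_apply]
  rw [Finset.sum_comm]
  refine Finset.sum_congr rfl fun i _ => Finset.sum_congr rfl fun j _ => ?_
  simp
  ring

lemma trace_rankOneMat {Q : ℕ} (v : EuclideanSpace ℂ (Fin Q)) (hv : ‖v‖ = 1) :
    (rankOneMat v).trace = 1 := by
  have h : (inner ℂ v v : ℂ) = 1 := by simp [inner_self_eq_norm_sq_to_K, hv]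
  rw [← h]
  simp only [PiLp.inner_apply, Matrix.trace, rankOneMat, RCLike.inner_apply, Matrix.diag,
    Matrix.of_apply, RCLike.star_def]

lemma upper_bound (Q : ℕ) (hQ : 2 ≤ Q) (M : ℕ) (hM : Q - 1 < M)
    (ψ : Fin M → Fin (Q + 1) → EuclideanSpace ℂ (Fin Q)) (h : IsMUETF Q (Q + 1) ψ) : False := by
  obtain ⟨h1, h2, h3⟩ := h
  have hQ0 : (Q : ℂ) ≠ 0 := by norm_cast; omega
  have hQR : (Q : ℝ) ≠ 0 := by norm_cast; omega
  have hQ1 : (Q : ℂ) - 1 ≠ 0 := by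
    rw [sub_ne_zero]; norm_cast; omega
  have hQ2 : (Q : ℂ) + 1 ≠ 0 := by norm_cast
  let P : Fin M → Fin Q → Matrix (Fin Q) (Fin Q) ℂ := fun m n => rankOneMat (ψ m n.castSucc)
  let T : Fin M × Fin Q → Matrix (Fin Q) (Fin Q) ℂ := fun x => (Q : ℂ) • P x.1 x.2 - 1
  have hPt : ∀ m n, (P m n).trace = 1 := fun m n => trace_rankOneMat _ (h1 _ _)
  have hTt : ∀ x, (T x).trace = 0 := by
    intro x
    simp [T, Matrix.trace_sub, Matrix.trace_smul, hPt]
  have hTT : ∀ x y, (T x * T y).trace = (Q : ℂ) ^ 2 * (P x.1 x.2 * P y.1 y.2).trace - Q := by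
    intro x y
    simp only [T, sub_mul, mul_sub, Matrix.trace_sub, Matrix.trace_smul, hPt, Matrix.mul_smul,
      Matrix.smul_mul, mul_one, one_mul, Matrix.trace_one, smul_eq_mul, Fintype.card_fin]
    ring
  have hT1 : ∀ m m' n n', m ≠ m' → (T (m, n) * T (m', n')).trace = 0 := by
    intro m m' n n' hm
    rw [hTT, trace_rankOneMat_mul, h3 _ _ _ _ hm]
    push_cast
    field_simp
    ring
  have hT2 : ∀ m n n', (T (m, n) * T (m, n')).trace
      = (if n = n' then (Q - 1) * ((Q : ℂ) + 1) else 0) - (Q - 1) := by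
    intro m n n'
    by_cases hn : n = n'
    · subst hn
      rw [hTT, trace_rankOneMat_mul]
      have : ‖(inner ℂ (ψ m n.castSucc) (ψ m n.castSucc) : ℂ)‖ = 1 := by
        simp [inner_self_eq_norm_sq_to_K, h1]
      rw [this]
      simp
      ring
    · rw [hTT, trace_rankOneMat_mul, h2 _ _ _ (by simpa using hn), if_neg hn]
      push_cast
      simp only [add_sub_cancel_left, add_sub_cancel_right]
      field_simp
      ring
  let S : Option (Fin M × Fin Q) → Matrix (Fin Q) (Fin Q) ℂ := fun o => o.elim 1 T
  have hli : LinearIndependent ℂ S := by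
    rw [Fintype.linearIndependent_iff]
    intro c hc
    rw [Fintype.sum_option] at hc
    simp only [S, Option.elim] at hc
    have hc0 : c none = 0 := by
      have := congrArg Matrix.trace hc
      simpa [Matrix.trace_add, Matrix.trace_sum, Matrix.trace_smul, hTt, hQ0] using this
    rw [hc0, zero_smul, zero_add] at hc
    have key : ∀ m k, ((Q : ℂ) + 1) * c (some (m, k)) = ∑ n, c (some (m, n)) := by
      intro m k
      have := congrArg (fun A => (T (m, k) * A).trace) hc
      simp only [Finset.mul_sum, Matrix.trace_sum, Matrix.mul_smul, Matrix.trace_smul, mul_zero,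
        Matrix.trace_zero, Fintype.sum_prod_type, smul_eq_mul] at this
      rw [Finset.sum_eq_single m] at this
      · simp only [hT2, mul_sub, Finset.sum_sub_distrib, mul_ite, mul_zero, Finset.sum_ite_eq,
          Finset.mem_univ, if_true, mul_one] at this
        rw [← Finset.sum_mul] at this
        apply mul_left_cancel₀ hQ1
        linear_combination this
      · intro m' _ hm
        exact Finset.sum_eq_zero fun n _ => by rw [hT1 _ _ _ _ hm.symm, mul_zero]
      · simp
    have hs : ∀ m, ∑ n, c (some (m, n)) = 0 := by
      intro m
      have := Finset.sum_congr rfl fun k (_ : k ∈ Finset.univ) => key m k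
      rw [← Finset.mul_sum] at this
      simp only [Finset.sum_const, Finset.card_univ, Fintype.card_fin, nsmul_eq_mul] at this
      linear_combination this
    rintro (_ | ⟨m, k⟩)
    · exact hc0
    · have := key m k
      rw [hs] at this
      exact (mul_eq_zero.mp this).resolve_left hQ2
  have hcard := hli.fintype_card_le_finrank
  simp [Module.finrank_matrix] at hcard
  have : Q ≤ M := by omega
  nlinarith


section
variable {L : Type*} [Field L] [Fintype L] [DecidableEq L] (p k : ℕ) [Fact p.Prime] [CharP L p]

/-- trace-one elements -/
def trOne (L : Type*) [Field L] [Fintype L] [DecidableEq L] (Q : ℕ) : Finset L :=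
  Finset.univ.filter fun x => x + x ^ Q = 1

/-- Frobenius-fixed elements -/
def fixQ (L : Type*) [Field L] [Fintype L] [DecidableEq L] (Q : ℕ) : Finset L :=
  Finset.univ.filter fun x => x ^ Q = x

lemma trOne_ne_zero {Q : ℕ} (hQ : Q ≠ 0) {x : L} (hx : x ∈ trOne L Q) : x ≠ 0 := by
  rintro rfl
  simp [trOne, hQ] at hx

lemma trOne_count {Q : ℕ} (hQ : Q = p ^ k) (hc : Fintype.card L = Q ^ 2) (g : L) :
    ((trOne L Q).filter fun x => g * x ∈ trOne L Q).card =
      if g ∈ fixQ L Q then (if g = 1 then (trOne L Q).card else 0) else 1 := by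
  have hp := (Fact.out : p.Prime)
  have hQ0 : Q ≠ 0 := by rw [hQ]; exact pow_ne_zero _ hp.ne_zero
  have hfr : ∀ x : L, (x ^ Q) ^ Q = x := by
    intro x
    rw [← pow_mul, ← sq, ← hc, FiniteField.pow_card]
  have hsub : ∀ x y : L, (x - y) ^ Q = x ^ Q - y ^ Q := by
    intro x y
    rw [hQ]; exact sub_pow_char_pow ..
  split_ifs with h1 h2
  · subst h2
    simp
  · rw [Finset.card_eq_zero, Finset.filter_eq_empty_iff]
    intro x hx hgx
    simp only [trOne, fixQ, Finset.mem_filter, Finset.mem_univ, true_and, mul_pow] at *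
    rw [h1] at hgx
    apply h2
    linear_combination hgx - g * hx
  · simp only [fixQ, Finset.mem_filter, Finset.mem_univ, true_and] at h1
    have hne : g - g ^ Q ≠ 0 := fun h => h1 (by linear_combination -h)
    have hne' : g ^ Q - g ≠ 0 := fun h => h1 (by linear_combination h)
    rw [Finset.card_eq_one]
    refine ⟨(1 - g ^ Q) / (g - g ^ Q), ?_⟩
    have hxq : ((1 - g ^ Q) / (g - g ^ Q)) ^ Q = (1 - g) / (g ^ Q - g) := by
      rw [div_pow, hsub, hsub, hfr, one_pow]
    ext x
    simp only [trOne, Finset.mem_filter, Finset.mem_univ, true_and, Finset.mem_singleton, mul_pow]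
    constructor
    · rintro ⟨ha, hb⟩
      rw [eq_div_iff hne]
      linear_combination hb - g ^ Q * ha
    · rintro rfl
      rw [hxq]
      have : (1 - g) / (g ^ Q - g) = - ((1 - g) / (g - g ^ Q)) := by
        rw [← neg_sub g (g ^ Q), div_neg]
      rw [this]
      constructor
      · field_simp
        ring
      · field_simp
        ring

lemma trOne_sum {Q : ℕ} (hQ : Q = p ^ k) (hc : Fintype.card L = Q ^ 2) (f : L → ℂ) :
    ∑ x ∈ trOne L Q, ∑ y ∈ trOne L Q, f (y / x) =
      (trOne L Q).card * f 1 + (∑ g, f g - ∑ g ∈ fixQ L Q, f g) := by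
  have hp := (Fact.out : p.Prime)
  have hQ0 : Q ≠ 0 := by rw [hQ]; exact pow_ne_zero _ hp.ne_zero
  have h1 : ∀ x ∈ trOne L Q, ∑ y ∈ trOne L Q, f (y / x) =
      ∑ g : L, if g * x ∈ trOne L Q then f g else 0 := by
    intro x hx
    have hx0 := trOne_ne_zero hQ0 hx
    rw [← Finset.sum_filter]
    refine Finset.sum_bij' (fun y _ => y / x) (fun g _ => g * x) ?_ ?_ ?_ ?_ ?_
    · intro y hy; simp [hx0, hy]
    · intro g hg; simpa using hg
    · intro y hy; simp [hx0]
    · intro g hg; simp [hx0]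
    · intro y hy; rfl
  rw [Finset.sum_congr rfl h1, Finset.sum_comm]
  have h2 : ∀ g : L, (∑ x ∈ trOne L Q, if g * x ∈ trOne L Q then f g else 0) =
      (if g = 1 then (trOne L Q).card * f g else 0) + (f g - if g ∈ fixQ L Q then f g else 0) := by
    intro g
    rw [← Finset.sum_filter, Finset.sum_const, trOne_count p k hQ hc]
    have : (1 : L) ∈ fixQ L Q := by simp [fixQ]
    by_cases hg : g = 1
    · subst hg
      simp [this]
    · by_cases hf : g ∈ fixQ L Q <;> simp [hg, hf]
  simp only [h2, Finset.sum_add_distrib, Finset.sum_sub_distrib, Finset.sum_ite_eq',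
    Finset.mem_univ, if_true, Finset.sum_ite_mem, Finset.univ_inter]

lemma card_fixQ {Q : ℕ} (hQ : 2 ≤ Q) (hc : Fintype.card L = Q ^ 2) : (fixQ L Q).card = Q := by
  obtain ⟨g, hg⟩ := IsCyclic.exists_generator (α := Lˣ)
  have ho : orderOf g = Q ^ 2 - 1 := by
    rw [orderOf_eq_card_of_forall_mem_zpowers hg, Nat.card_eq_fintype_card, Fintype.card_units, hc]
  have hfac : Q ^ 2 - 1 = (Q + 1) * (Q - 1) := by
    have := Nat.sq_sub_sq Q 1
    simpa using this
  have hpr : IsPrimitiveRoot ((g : L) ) (Q ^ 2 - 1) := by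
    rw [← ho, ← orderOf_units]; exact IsPrimitiveRoot.orderOf _
  have hpr2 := hpr.pow (n := Q ^ 2 - 1) (by have : 4 ≤ Q ^ 2 := by nlinarith
                                            omega) hfac
  have h3 : fixQ L Q = insert 0 (Polynomial.nthRootsFinset (Q - 1) (1 : L)) := by
    ext x
    rw [Finset.mem_insert, Polynomial.mem_nthRootsFinset (by omega)]
    simp only [fixQ, Finset.mem_filter, Finset.mem_univ, true_and]
    have : x ^ Q = x * x ^ (Q - 1) := by rw [← pow_succ']; congr 1; omega
    rw [this]
    by_cases hx : x = 0
    · simp [hx]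
    · simp [hx]
  rw [h3, Finset.card_insert_of_notMem, hpr2.card_nthRootsFinset]
  · omega
  · rw [Polynomial.mem_nthRootsFinset (by omega)]
    rw [zero_pow (by omega)]; exact zero_ne_one

lemma card_trOne {Q : ℕ} (hQ2 : 2 ≤ Q) (hQ : Q = p ^ k) (hc : Fintype.card L = Q ^ 2) :
    (trOne L Q).card = Q := by
  have h := trOne_sum p k hQ hc (fun _ => 1)
  simp only [Finset.sum_const, nsmul_eq_mul, mul_one, card_fixQ hQ2 hc, Finset.card_univ, hc] at h
  have h2 : ((trOne L Q).card : ℤ) * (trOne L Q).card = (trOne L Q).card + ((Q : ℤ) ^ 2 - Q) := by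
    exact_mod_cast h
  have h3 : (((trOne L Q).card : ℤ) - Q) * ((trOne L Q).card + Q - 1) = 0 := by linear_combination h2
  rcases mul_eq_zero.mp h3 with h | h <;> omega

lemma norm_sum_trOne {Q : ℕ} (hQ2 : 2 ≤ Q) (hQ : Q = p ^ k) (hc : Fintype.card L = Q ^ 2)
    (η : MulChar L ℂ) (hη : η ≠ 1) :
    ((‖∑ x ∈ trOne L Q, η x‖ ^ 2 : ℝ) : ℂ) = Q - ∑ g ∈ fixQ L Q, η g := by
  have h := trOne_sum p k hQ hc η
  rw [card_trOne p k hQ2 hQ hc, MulChar.sum_eq_zero_of_ne_one hη, map_one] at h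
  have h0 : ((‖∑ x ∈ trOne L Q, η x‖ ^ 2 : ℝ) : ℂ)
      = (star (∑ x ∈ trOne L Q, η x)) * (∑ x ∈ trOne L Q, η x) := by
    push_cast
    exact (Complex.conj_mul' _).symm
  rw [h0, star_sum, Finset.sum_mul_sum]
  rw [← sub_eq_zero] at h ⊢
  rw [← h]
  congr 1
  · refine Finset.sum_congr rfl fun x hx => Finset.sum_congr rfl fun y hy => ?_
    rw [div_eq_mul_inv, map_mul, MulChar.star_apply', ← MulChar.inv_apply', mul_comm]
  · ring

lemma sum_fixQ_trivial {Q : ℕ} (hQ2 : 2 ≤ Q) (hc : Fintype.card L = Q ^ 2)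
    (χ : MulChar L ℂ) (η : MulChar L ℂ) (h : η = χ ^ (Q - 1)) :
    ∑ g ∈ fixQ L Q, η g = Q - 1 := by
  have h0 : (0 : L) ∈ fixQ L Q := by simp [fixQ]; omega
  rw [← Finset.add_sum_erase _ _ h0, MulChar.map_zero, zero_add]
  have : ∀ g ∈ (fixQ L Q).erase 0, η g = 1 := by
    intro g hg
    simp only [fixQ, Finset.mem_erase, Finset.mem_filter, Finset.mem_univ, true_and] at hg
    have h1 : g ^ (Q - 1) = 1 := by
      apply mul_left_cancel₀ hg.1
      rw [← pow_succ', mul_one, Nat.sub_add_cancel (by omega), hg.2]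
    rw [h, MulChar.pow_apply' _ (by omega), ← map_pow, h1, map_one]
  rw [Finset.sum_congr rfl this, Finset.sum_const, Finset.card_erase_of_mem h0, card_fixQ hQ2 hc]
  rw [nsmul_eq_mul, mul_one, Nat.cast_sub (by omega)]; simp

lemma sum_fixQ_nontrivial {Q : ℕ} (hQ2 : 2 ≤ Q) (hc : Fintype.card L = Q ^ 2)
    (η : MulChar L ℂ) (h : η ^ (Q + 1) ≠ 1) :
    ∑ g ∈ fixQ L Q, η g = 0 := by
  rw [MulChar.ne_one_iff] at h
  obtain ⟨u, hu⟩ := h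
  rw [MulChar.pow_apply' _ (by omega), ← map_pow] at hu
  set w : L := (u : L) ^ (Q + 1) with hw
  have hw0 : w ≠ 0 := pow_ne_zero _ u.ne_zero
  have hwf : w ^ Q = w := by
    rw [hw, ← pow_mul, add_mul, one_mul, ← sq, pow_add, ← hc, FiniteField.pow_card, pow_succ, mul_comm]
  have : ∑ g ∈ fixQ L Q, η g = η w * ∑ g ∈ fixQ L Q, η g := by
    rw [Finset.mul_sum]
    refine Finset.sum_bij' (fun g _ => g / w) (fun g _ => g * w) ?_ ?_ ?_ ?_ ?_
    · intro g hg
      simp only [fixQ, Finset.mem_filter, Finset.mem_univ, true_and] at hg ⊢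
      rw [div_pow, hg, hwf]
    · intro g hg
      simp only [fixQ, Finset.mem_filter, Finset.mem_univ, true_and] at hg ⊢
      rw [mul_pow, hg, hwf]
    · intro g hg; simp [hw0]
    · intro g hg; simp [hw0]
    · intro g hg
      rw [← map_mul, mul_div_cancel₀ _ hw0]
  have h2 : (η w - 1) * ∑ g ∈ fixQ L Q, η g = 0 := by linear_combination -this
  exact (mul_eq_zero.mp h2).resolve_left (sub_ne_zero.mpr hu)

end

lemma exists_muetf (Q : ℕ) (hQ : 2 ≤ Q) (hpp : IsPrimePow Q) :
    ∃ ψ : Fin (Q - 1) → Fin (Q + 1) → EuclideanSpace ℂ (Fin Q), IsMUETF Q (Q + 1) ψ := by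
  classical
  obtain ⟨p, k, hp, hk, hpk⟩ := hpp
  have hp' : p.Prime := hp.nat_prime
  have : Fact p.Prime := ⟨hp'⟩
  let L := GaloisField p (k * 2)
  let _ : Fintype L := Fintype.ofFinite L
  have hc : Fintype.card L = Q ^ 2 := by
    rw [← Nat.card_eq_fintype_card, GaloisField.card p (k * 2) (by omega), ← hpk, pow_mul]
  have hQp : Q = p ^ k := hpk.symm
  have hQ4 : 4 ≤ Q ^ 2 := by nlinarith
  have hfac : Q ^ 2 - 1 = (Q + 1) * (Q - 1) := by
    have := Nat.sq_sub_sq Q 1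
    simpa using this
  obtain ⟨χ, hχ⟩ := MulChar.exists_mulChar_orderOf L (n := Q ^ 2 - 1) (by rw [hc])
    (Complex.isPrimitiveRoot_exp (Q ^ 2 - 1) (by omega))
  have hcard := card_trOne (L := L) p k hQ hQp hc
  let e : Fin Q ≃ trOne L Q := (Fintype.equivFinOfCardEq (by simp [hcard])).symm
  let θ : Fin (Q - 1) → Fin (Q + 1) → MulChar L ℂ := fun m n => χ ^ ((m : ℕ) + (Q - 1) * (n : ℕ))
  let r : ℂ := ((Real.sqrt Q)⁻¹ : ℝ)
  have hQ0 : (Q : ℝ) ≠ 0 := by norm_cast; omega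
  have hQC : (Q : ℂ) ≠ 0 := by norm_cast; omega
  have hr : star r * r = (Q : ℂ)⁻¹ := by
    have h1 : star r = r := Complex.conj_ofReal _
    rw [h1]
    simp only [r]
    rw [← Complex.ofReal_mul, ← mul_inv, Real.mul_self_sqrt (by positivity)]
    simp
  let ψ : Fin (Q - 1) → Fin (Q + 1) → EuclideanSpace ℂ (Fin Q) :=
    fun m n => WithLp.toLp 2 fun i => r * θ m n (e i : L)
  have hin : ∀ m n m' n', (inner ℂ (ψ m n) (ψ m' n') : ℂ) =
      (Q : ℂ)⁻¹ * ∑ x ∈ trOne L Q, ((θ m n)⁻¹ * θ m' n') x := by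
    intro m n m' n'
    rw [← hr, ← Finset.sum_coe_sort, ← e.sum_comp, Finset.mul_sum]
    simp only [PiLp.inner_apply, RCLike.inner_apply, ψ]
    refine Finset.sum_congr rfl fun i _ => ?_
    rw [MulChar.mul_apply, ← MulChar.star_apply', map_mul]
    simp only [RCLike.star_def]
    ring
  have hnsq : ∀ m n m' n', (θ m n)⁻¹ * θ m' n' ≠ 1 →
      ((‖(inner ℂ (ψ m n) (ψ m' n') : ℂ)‖ ^ 2 : ℝ) : ℂ) =
        ((Q : ℂ) ^ 2)⁻¹ * (Q - ∑ g ∈ fixQ L Q, ((θ m n)⁻¹ * θ m' n') g) := by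
    intro m n m' n' hne
    rw [← norm_sum_trOne p k hQ hQp hc _ hne, hin, norm_mul, mul_pow]
    push_cast
    simp
  refine ⟨ψ, ?_, ?_, ?_⟩
  · intro m n
    have h1 : (inner ℂ (ψ m n) (ψ m n) : ℂ) = 1 := by
      rw [hin, inv_mul_cancel]
      rw [Finset.sum_congr rfl (g := fun _ => (1 : ℂ))]
      · simp [hcard, hQC]
      · intro x hx
        exact MulChar.one_apply (isUnit_iff_ne_zero.mpr (trOne_ne_zero (by omega) hx))
    rw [inner_self_eq_norm_sq_to_K] at h1
    have h2 : ‖ψ m n‖ ^ 2 = 1 := Complex.ofReal_injective (by simpa using h1)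
    exact (pow_eq_one_iff_of_nonneg (norm_nonneg _) (by norm_num)).mp h2
  · intro m n n' hn
    have hne : (θ m n)⁻¹ * θ m n' ≠ 1 := by
      intro h
      rw [inv_mul_eq_one] at h
      have hlt : ∀ j : Fin (Q + 1), (m : ℕ) + (Q - 1) * (j : ℕ) < orderOf χ := by
        intro j
        rw [hχ, hfac, mul_comm (Q + 1)]
        have h1 := m.2
        have h2 : (j : ℕ) ≤ Q := by omega
        have h3 := Nat.mul_le_mul_left (Q - 1) h2
        rw [mul_add, mul_one]
        omega
      have := pow_injOn_Iio_orderOf (hlt n) (hlt n') h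
      apply hn
      have h4 : (Q - 1) * (n : ℕ) = (Q - 1) * n' := by omega
      exact Fin.ext (Nat.eq_of_mul_eq_mul_left (by omega) h4)
    have h1 := hnsq _ _ _ _ hne
    rw [sum_fixQ_trivial hQ hc ((χ ^ (n : ℕ))⁻¹ * χ ^ (n' : ℕ))] at h1
    · have h2 : ((Q : ℂ) ^ 2)⁻¹ * (Q - (Q - 1)) = ((((Q : ℝ) ^ 2)⁻¹ : ℝ) : ℂ) := by
        push_cast; ring
      rw [h2] at h1
      rw [Complex.ofReal_injective h1]
      push_cast
      rw [add_sub_cancel_left, add_sub_cancel_right, sq, one_div]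
    · simp only [θ]
      rw [mul_pow, inv_pow, ← pow_mul, ← pow_mul, pow_add, pow_add, mul_comm (n : ℕ),
        mul_comm (n' : ℕ), mul_inv]
      group
  · intro m m' n n' hm
    have hne2 : ((θ m n)⁻¹ * θ m' n') ^ (Q + 1) ≠ 1 := by
      intro h
      rw [mul_pow, inv_pow, inv_mul_eq_one] at h
      simp only [θ] at h
      rw [← pow_mul, ← pow_mul, pow_eq_pow_iff_modEq, hχ, hfac, mul_comm (Q + 1) (Q - 1)] at h
      have h1 := Nat.ModEq.mul_right_cancel' (c := Q + 1) (by omega) h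
      have h2 : (m : ℕ) % (Q - 1) = (m' : ℕ) % (Q - 1) := by
        simpa [Nat.ModEq] using h1
      rw [Nat.mod_eq_of_lt m.2, Nat.mod_eq_of_lt m'.2] at h2
      exact hm (Fin.ext h2)
    have hne : (θ m n)⁻¹ * θ m' n' ≠ 1 := by
      intro h; rw [h, one_pow] at hne2; exact hne2 rfl
    have h1 := hnsq _ _ _ _ hne
    rw [sum_fixQ_nontrivial hQ hc _ hne2] at h1
    have h2 : ((Q : ℂ) ^ 2)⁻¹ * (Q - 0) = ((1 / (Q : ℝ) : ℝ) : ℂ) := by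
      push_cast; field_simp; ring
    rw [h2] at h1
    exact Complex.ofReal_injective h1

/-- for a prime power `Q ≥ 2`, the maximal number of mutually unbiased
complex `ETF(Q,Q+1)` equals `Q−1`: an `MUETF(Q, Q+1, Q−1)` exists in `ℂ^Q`, and no
`MUETF(Q, Q+1, M)` exists in `ℂ^Q` with `M > Q−1`. -/
theorem stmt17 (Q : ℕ) (hQ : 2 ≤ Q) (hpp : IsPrimePow Q) :
    (∃ ψ : Fin (Q - 1) → Fin (Q + 1) → EuclideanSpace ℂ (Fin Q),
      IsMUETF Q (Q + 1) ψ) ∧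
    ∀ M : ℕ, Q - 1 < M →
      ¬ ∃ ψ : Fin M → Fin (Q + 1) → EuclideanSpace ℂ (Fin Q),
        IsMUETF Q (Q + 1) ψ := by
  exact ⟨exists_muetf Q hQ hpp, fun M hM ⟨ψ, h⟩ => upper_bound Q hQ M hM ψ h⟩
end
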